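/- Let λ ≥ 1, 0 < σ < 1 and 0 < α < 1 with 0 < α − 2σ < 1. Then there exists a constant C = C(λ, σ, α) > 0 such that for every u ∈ C^α_+ with ∫₀^∞ |u(x)|/(1+x)^{1+2σ} dx < ∞, the function v(x) := (1/Γ(−2σ)) ∫₀^∞ (P_t^λ u(x) − u(x)) t^{−1−2σ} dt is well defined for every x > 0 (the integral converges absolutely), v belongs to C^{α−2σ}_+, and ‖v‖_{C^{α−2σ}_+} ≤ C ‖u‖_{C^α_+}. -/

import Mathlib

open Real MeasureTheory Set Filter

noncomputable section

/-- The modified Bessel function of the first kind `I_ν(z)`. -/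
def besselI (ν z : ℝ) : ℝ :=
  ∑' k : ℕ, (z / 2) ^ (2 * (k : ℝ) + ν) / ((Nat.factorial k : ℝ) * Real.Gamma ((k : ℝ) + ν + 1))

/-- The Bessel heat kernel `W_t^λ(x,y)`. -/
def besselHeatKernel (lam t x y : ℝ) : ℝ :=
  Real.sqrt (x * y) / (2 * t) * besselI (lam - 1 / 2) (x * y / (2 * t)) *
    Real.exp (-(x ^ 2 + y ^ 2) / (4 * t))

/-- The Bessel–Poisson kernel `P_t^λ(x,y)`, obtained by subordination. -/
def besselPoissonKernel (lam t x y : ℝ) : ℝ :=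
  t / (2 * Real.sqrt Real.pi) *
    ∫ s in Set.Ioi (0 : ℝ),
      s ^ (-(3 : ℝ) / 2) * Real.exp (-t ^ 2 / (4 * s)) * besselHeatKernel lam s x y

/-- The Bessel heat semigroup `W_t^λ u (x)`. -/
def heatSemigroup (lam : ℝ) (u : ℝ → ℝ) (t x : ℝ) : ℝ :=
  ∫ y in Set.Ioi (0 : ℝ), besselHeatKernel lam t x y * u y

/-- The Bessel–Poisson semigroup `P_t^λ f (x)`. -/
def poissonSemigroup (lam : ℝ) (f : ℝ → ℝ) (t x : ℝ) : ℝ :=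
  ∫ y in Set.Ioi (0 : ℝ), besselPoissonKernel lam t x y * f y

/-- The set of Hölder quotients of `f` on `(0,∞)`. -/
def holderRatioSet (α : ℝ) (f : ℝ → ℝ) : Set ℝ :=
  {r | ∃ x y : ℝ, 0 < x ∧ 0 < y ∧ x ≠ y ∧ r = |f x - f y| / |x - y| ^ α}

/-- The set of growth quotients `|f x|/x^α` of `f` on `(0,∞)`. -/
def growthRatioSet (α : ℝ) (f : ℝ → ℝ) : Set ℝ :=
  {r | ∃ x : ℝ, 0 < x ∧ r = |f x| / x ^ α}

/-- Membership in the Hölder space `C^α_+` (equal to `Lip_+` when `α = 1`). -/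
def MemHolderPlus (α : ℝ) (f : ℝ → ℝ) : Prop :=
  ContinuousOn f (Set.Ioi 0) ∧ BddAbove (holderRatioSet α f) ∧ BddAbove (growthRatioSet α f)

/-- The `C^α_+` norm. -/
def holderPlusNorm (α : ℝ) (f : ℝ → ℝ) : ℝ :=
  sSup (holderRatioSet α f) + sSup (growthRatioSet α f)

/-- `Γ(-σ)`, written through the functional equation `Γ(-σ) = Γ(2-σ)/((-σ)(1-σ))`. -/
def gammaNeg (σ : ℝ) : ℝ := Real.Gamma (2 - σ) / (-σ * (1 - σ))

/-- The kernel `K_σ^λ(x,y)`. -/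
def fracKernelK (lam σ x y : ℝ) : ℝ :=
  1 / (-gammaNeg σ) * ∫ t in Set.Ioi (0 : ℝ), besselHeatKernel lam t x y * t ^ (-1 - σ)

/-- `W_t^λ 1 (x)`. -/
def heatOne (lam t x : ℝ) : ℝ := ∫ y in Set.Ioi (0 : ℝ), besselHeatKernel lam t x y

/-- The function `B_σ^λ(x)`. -/
def fracFunB (lam σ x : ℝ) : ℝ :=
  1 / gammaNeg σ * ∫ t in Set.Ioi (0 : ℝ), (heatOne lam t x - 1) * t ^ (-1 - σ)

/-- The integer `m` with `m - 1 ≤ β < m`. -/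
def fracOrder (β : ℝ) : ℕ := Nat.floor β + 1

/-- The Segovia–Wheeden fractional derivative `∂_t^β F(t)`, a complex number. -/
def fracDeriv (β : ℝ) (F : ℝ → ℝ) (t : ℝ) : ℂ :=
  Complex.exp (-(Real.pi * ((fracOrder β : ℝ) - β)) * Complex.I) /
      Complex.ofReal (Real.Gamma ((fracOrder β : ℝ) - β)) *
    Complex.ofReal
      (∫ s in Set.Ioi (0 : ℝ),
        iteratedDeriv (fracOrder β) F (t + s) * s ^ ((fracOrder β : ℝ) - β - 1))

/-!
Extended by zero to `(-∞, 0]`, `u` is a Hölder function on the whole line.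

* Comparing power series termwise, `W_t^λ` is dominated by the Dirichlet heat kernel. Since `W_t^λ`
  fixes `y ^ λ`, subtracting `u(x) (y / x) ^ λ` from `u` does not change `W_t^λ u(x) - u(x)`, and
  the difference is small near `y = x`.
* Writing `W_{1/4}^λ g` as `x ^ λ` times a Poisson mean of moments of `g` gives the intertwining
  `D_λ W^λ = W^{λ+1} D_λ` with `D_λ = d/dx - λ/x`, hence a Lipschitz bound for differentiable data;
  splitting `u` into a Steklov mean and a remainder turns it into a Hölder bound.
* Scaling gives all times, subordination passes to `P_t^λ`, and the `t`-integral is split at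
  `t = x`, respectively `t = |x₁ - x₂|`, where the two bounds on the integrand balance.
-/

open scoped Nat NNReal Topology

/-! ### Domination by the Dirichlet heat kernel of the half-line -/

lemma Gamma_mul_rpow_le_Gamma_add {a μ : ℝ} (ha : 1 < a) (hμ : 0 ≤ μ) :
    Gamma a * (a - 1) ^ μ ≤ Gamma (a + μ) := by
  rcases hμ.eq_or_lt with rfl | hμ
  · simp
  have ha0 : 0 < a - 1 := by linarith
  have hG : 0 < Gamma a := Gamma_pos_of_pos (by linarith)
  have hΓ : log (Gamma a) - log (Gamma (a - 1)) = log (a - 1) := by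
    have hrec := Gamma_add_one ha0.ne'
    rw [sub_add_cancel] at hrec
    rw [hrec, log_mul ha0.ne' (Gamma_pos_of_pos ha0).ne', add_sub_cancel_right]
  have hslope := convexOn_log_Gamma.slope_mono_adjacent (x := a - 1) (y := a) (z := a + μ)
    (mem_Ioi.2 ha0) (mem_Ioi.2 (by linarith)) (by linarith) (by linarith)
  simp only [Function.comp_apply, sub_sub_cancel, div_one, add_sub_cancel_left, hΓ] at hslope
  rw [le_div_iff₀ hμ] at hslope
  rw [← log_le_log_iff (by positivity) (Gamma_pos_of_pos (by linarith)),
    log_mul hG.ne' (by positivity), log_rpow ha0]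
  linarith

lemma factorial_mul_Gamma_add_three_halves (k : ℕ) :
    (k ! : ℝ) * Gamma (k + 3 / 2) = (2 * k + 1)! / 2 ^ (2 * k + 1) * √π := by
  have h := Gamma_mul_Gamma_add_half ((k : ℝ) + 1)
  rw [Gamma_nat_eq_factorial, show (k : ℝ) + 1 + 1 / 2 = k + 3 / 2 by ring,
    show (2 : ℝ) * ((k : ℝ) + 1) = ((2 * k + 1 : ℕ) : ℝ) + 1 by push_cast; ring,
    Gamma_nat_eq_factorial, sub_add_cancel_right, rpow_neg zero_le_two, rpow_natCast] at h
  rw [h, div_eq_mul_inv]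

lemma div_pow_mul_pow_div_factorial_le {z : ℝ} (hz : 0 ≤ z) {n : ℕ} (hn : n ≠ 0) (m : ℕ) :
    (z / n) ^ m * (z ^ n / n !) ≤ (m + 1) ^ m * (z ^ (n + m) / (n + m)!) := by
  have hn1 : 1 ≤ n := Nat.one_le_iff_ne_zero.2 hn
  have hfac : (n + m)! ≤ n ! * ((m + 1) * n) ^ m :=
    calc (n + m)! = n ! * (n + 1).ascFactorial m := (Nat.factorial_mul_ascFactorial n m).symm
      _ ≤ n ! * (n + m) ^ m := Nat.mul_le_mul_left _ (Nat.ascFactorial_le_pow_add n m)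
      _ ≤ n ! * ((m + 1) * n) ^ m := by gcongr; nlinarith
  have hfac' : ((n + m)! : ℝ) ≤ n ! * ((m + 1) * n) ^ m := mod_cast hfac
  rw [div_pow, div_mul_div_comm, ← mul_div_assoc, div_le_div_iff₀ (by positivity) (by positivity)]
  calc z ^ m * z ^ n * (n + m)! ≤ z ^ m * z ^ n * (n ! * ((m + 1) * n) ^ m) := by gcongr
    _ = (m + 1) ^ m * z ^ (n + m) * (n ^ m * n !) := by rw [mul_pow, pow_add]; ring

lemma rpow_le_one_add_pow {q μ : ℝ} {m : ℕ} (hq : 0 ≤ q) (hμ : 0 ≤ μ) (hm : μ ≤ m) :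
    q ^ μ ≤ 1 + q ^ m := by
  rcases le_total q 1 with h | h
  · exact (rpow_le_one hq h hμ).trans (le_add_of_nonneg_right (by positivity))
  · exact (rpow_le_rpow_of_exponent_le h hm).trans (by rw [rpow_natCast]; linarith)

/-- The `k`-th term of the power series of `√w * I_{λ-1/2}(2w)`, the profile of the Bessel heat
kernel at time `1/4` as a function of `w = xy`. -/
def besselTerm (lam : ℝ) (k : ℕ) (w : ℝ) : ℝ :=
  w ^ (2 * (k : ℝ) + lam) / (k ! * Gamma (k + lam + 1 / 2))

section besselTerm

variable {lam w : ℝ}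

lemma besselTerm_nonneg (hlam : 0 ≤ lam) (k : ℕ) (hw : 0 ≤ w) : 0 ≤ besselTerm lam k w := by
  have : 0 < Gamma (k + lam + 1 / 2) := Gamma_pos_of_pos (by positivity)
  unfold besselTerm
  positivity

lemma besselTerm_one (k : ℕ) (w : ℝ) :
    besselTerm 1 k w = (√π)⁻¹ * ((2 * w) ^ (2 * k + 1) / (2 * k + 1)!) := by
  have hpi : √π ≠ 0 := (sqrt_pos.2 pi_pos).ne'
  rw [besselTerm, show (k : ℝ) + 1 + 1 / 2 = k + 3 / 2 by ring,
    factorial_mul_Gamma_add_three_halves,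
    show 2 * (k : ℝ) + 1 = ((2 * k + 1 : ℕ) : ℝ) by push_cast; ring, rpow_natCast, mul_pow]
  field_simp

lemma hasSum_besselTerm_one (w : ℝ) :
    HasSum (fun k => besselTerm 1 k w) ((√π)⁻¹ * sinh (2 * w)) := by
  simpa only [besselTerm_one] using (hasSum_sinh (2 * w)).mul_left (√π)⁻¹

lemma besselTerm_le_rpow_mul (hlam : 1 ≤ lam) (k : ℕ) (hw : 0 < w) :
    besselTerm lam k w ≤ (2 * w / (2 * k + 1)) ^ (lam - 1) * besselTerm 1 k w := by
  have : (0 : ℝ) ≤ k := k.cast_nonneg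
  have : 0 < Gamma ((k : ℝ) + 1 + 1 / 2) := Gamma_pos_of_pos (by positivity)
  have hratio := Gamma_mul_rpow_le_Gamma_add (a := (k : ℝ) + 1 + 1 / 2) (μ := lam - 1)
    (by linarith) (by linarith)
  rw [show (k : ℝ) + 1 + 1 / 2 + (lam - 1) = k + lam + 1 / 2 by ring,
    show (k : ℝ) + 1 + 1 / 2 - 1 = (2 * k + 1) / 2 by ring] at hratio
  rw [besselTerm, besselTerm, mul_comm 2 w, ← div_div_eq_mul_div, div_rpow hw.le (by positivity),
    div_mul_div_comm, ← rpow_add hw, show lam - 1 + (2 * (k : ℝ) + 1) = 2 * k + lam by ring]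
  refine div_le_div_of_nonneg_left (by positivity) (by positivity) ?_
  rw [mul_left_comm, mul_comm _ (Gamma _)]
  gcongr

lemma besselTerm_le_add (hlam : 1 ≤ lam) {j : ℕ} (hj : lam - 1 ≤ 2 * j) (k : ℕ) (hw : 0 < w) :
    besselTerm lam k w ≤
      besselTerm 1 k w + (2 * j + 1) ^ (2 * j) * besselTerm 1 (k + j) w := by
  have hpow : (2 * w / (2 * k + 1)) ^ (2 * j) * besselTerm 1 k w ≤
      (2 * j + 1) ^ (2 * j) * besselTerm 1 (k + j) w := by
    have h := div_pow_mul_pow_div_factorial_le (z := 2 * w) (by positivity)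
      (2 * k).succ_ne_zero (2 * j)
    rw [Nat.succ_eq_add_one, show 2 * k + 1 + 2 * j = 2 * (k + j) + 1 by ring] at h
    push_cast at h
    rw [besselTerm_one, besselTerm_one, mul_left_comm, mul_left_comm _ (√π)⁻¹]
    gcongr
  calc besselTerm lam k w ≤ (2 * w / (2 * k + 1)) ^ (lam - 1) * besselTerm 1 k w :=
        besselTerm_le_rpow_mul hlam k hw
    _ ≤ (1 + (2 * w / (2 * k + 1)) ^ (2 * j)) * besselTerm 1 k w := by
        have := besselTerm_nonneg zero_le_one k hw.le
        gcongr
        exact rpow_le_one_add_pow (by positivity) (by linarith) (by exact_mod_cast hj)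
    _ ≤ besselTerm 1 k w + (2 * j + 1) ^ (2 * j) * besselTerm 1 (k + j) w := by linarith

lemma summable_besselTerm (hlam : 1 ≤ lam) (hw : 0 < w) :
    Summable (fun k => besselTerm lam k w) := by
  obtain ⟨j, hj⟩ := exists_nat_ge (lam - 1)
  have hs := (hasSum_besselTerm_one w).summable
  exact Summable.of_nonneg_of_le (fun k => besselTerm_nonneg (by linarith) k hw.le)
    (fun k => besselTerm_le_add hlam (j := j) (by linarith [j.cast_nonneg (α := ℝ)]) k hw)
    (hs.add (((summable_nat_add_iff j).2 hs).mul_left _))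

lemma exists_tsum_besselTerm_le (hlam : 1 ≤ lam) :
    ∃ C : ℝ, 0 < C ∧ ∀ w, 0 < w →
      ∑' k, besselTerm lam k w ≤ C * ((√π)⁻¹ * sinh (2 * w)) := by
  obtain ⟨j, hj⟩ := exists_nat_ge (lam - 1)
  refine ⟨1 + (2 * j + 1) ^ (2 * j), by positivity, fun w hw => ?_⟩
  have hs := (hasSum_besselTerm_one w).summable
  have hs' := ((summable_nat_add_iff j).2 hs).mul_left (((2 : ℝ) * j + 1) ^ (2 * j))
  have hshift : ∑' k, besselTerm 1 (k + j) w ≤ ∑' k, besselTerm 1 k w := by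
    rw [← hs.sum_add_tsum_nat_add j]
    exact le_add_of_nonneg_left (Finset.sum_nonneg fun i _ => besselTerm_nonneg zero_le_one i hw.le)
  calc ∑' k, besselTerm lam k w
      ≤ ∑' k, (besselTerm 1 k w + (2 * j + 1) ^ (2 * j) * besselTerm 1 (k + j) w) :=
        (summable_besselTerm hlam hw).tsum_le_tsum
          (fun k => besselTerm_le_add hlam (by linarith [j.cast_nonneg (α := ℝ)]) k hw)
          (hs.add hs')
    _ = ∑' k, besselTerm 1 k w + (2 * j + 1) ^ (2 * j) * ∑' k, besselTerm 1 (k + j) w := by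
        rw [hs.tsum_add hs', tsum_mul_left]
    _ ≤ ∑' k, besselTerm 1 k w + (2 * j + 1) ^ (2 * j) * ∑' k, besselTerm 1 k w := by gcongr
    _ = (1 + (2 * j + 1) ^ (2 * j)) * ((√π)⁻¹ * sinh (2 * w)) := by
        rw [(hasSum_besselTerm_one w).tsum_eq]; ring

end besselTerm

/-- The heat kernel of `(0, ∞)` with Dirichlet boundary condition, at time `1/4`. -/
def dirichletKernel (x y : ℝ) : ℝ := (√π)⁻¹ * (exp (-(x - y) ^ 2) - exp (-(x + y) ^ 2))

lemma dirichletKernel_eq_sinh (x y : ℝ) :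
    dirichletKernel x y = 2 * ((√π)⁻¹ * sinh (2 * (x * y))) * exp (-(x ^ 2) - y ^ 2) := by
  rw [dirichletKernel, sinh_eq, show -(x - y) ^ 2 = 2 * (x * y) + (-(x ^ 2) - y ^ 2) by ring,
    show -(x + y) ^ 2 = -(2 * (x * y)) + (-(x ^ 2) - y ^ 2) by ring, exp_add, exp_add]
  ring

lemma dirichletKernel_le_exp (x y : ℝ) : dirichletKernel x y ≤ exp (-(x - y) ^ 2) := by
  have hpi : (√π)⁻¹ ≤ 1 :=
    inv_le_one_of_one_le₀ (one_le_sqrt.2 (by linarith [pi_gt_three]))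
  calc dirichletKernel x y ≤ (√π)⁻¹ * exp (-(x - y) ^ 2) := by
        unfold dirichletKernel
        gcongr
        linarith [exp_pos (-(x + y) ^ 2)]
    _ ≤ exp (-(x - y) ^ 2) := mul_le_of_le_one_left (exp_pos _).le hpi

lemma besselHeatKernel_quarter {x y : ℝ} (lam : ℝ) (hx : 0 < x) (hy : 0 < y) :
    besselHeatKernel lam (1 / 4) x y =
      2 * (∑' k, besselTerm lam k (x * y)) * exp (-(x ^ 2) - y ^ 2) := by
  have hw : 0 < x * y := mul_pos hx hy
  have hterm : ∀ k : ℕ, besselTerm lam k (x * y) =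
      √(x * y) * ((x * y / (2 * (1 / 4)) / 2) ^ (2 * (k : ℝ) + (lam - 1 / 2)) /
        (k ! * Gamma (k + (lam - 1 / 2) + 1))) := fun k => by
    rw [besselTerm, sqrt_eq_rpow, show x * y / (2 * (1 / 4)) / 2 = x * y by ring,
      ← mul_div_assoc, ← rpow_add hw]
    ring_nf
  simp_rw [hterm, tsum_mul_left]
  rw [besselHeatKernel, besselI, show -(x ^ 2) - y ^ 2 = -(x ^ 2 + y ^ 2) / (4 * (1 / 4)) by ring]
  ring

lemma besselHeatKernel_one_quarter {x y : ℝ} (hx : 0 < x) (hy : 0 < y) :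
    besselHeatKernel 1 (1 / 4) x y = dirichletKernel x y := by
  rw [besselHeatKernel_quarter 1 hx hy, (hasSum_besselTerm_one _).tsum_eq, dirichletKernel_eq_sinh]

lemma exists_besselHeatKernel_quarter_le {lam : ℝ} (hlam : 1 ≤ lam) :
    ∃ C : ℝ, 0 < C ∧ ∀ x y : ℝ, 0 < x → 0 < y →
      besselHeatKernel lam (1 / 4) x y ≤ C * dirichletKernel x y := by
  obtain ⟨C, hC, hle⟩ := exists_tsum_besselTerm_le hlam
  refine ⟨C, hC, fun x y hx hy => ?_⟩
  calc besselHeatKernel lam (1 / 4) x y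
      = 2 * (∑' k, besselTerm lam k (x * y)) * exp (-(x ^ 2) - y ^ 2) :=
        besselHeatKernel_quarter lam hx hy
    _ ≤ 2 * (C * ((√π)⁻¹ * sinh (2 * (x * y)))) * exp (-(x ^ 2) - y ^ 2) := by
        gcongr
        exact hle _ (mul_pos hx hy)
    _ = C * dirichletKernel x y := by rw [dirichletKernel_eq_sinh]; ring

lemma besselHeatKernel_nonneg {lam t x y : ℝ} (hlam : 0 ≤ lam) (ht : 0 < t) (hx : 0 < x)
    (hy : 0 < y) : 0 ≤ besselHeatKernel lam t x y := by
  have hI : 0 ≤ besselI (lam - 1 / 2) (x * y / (2 * t)) := tsum_nonneg fun k => by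
    have : 0 < Gamma (k + (lam - 1 / 2) + 1) :=
      Gamma_pos_of_pos (by linarith [k.cast_nonneg (α := ℝ)])
    positivity
  unfold besselHeatKernel
  positivity

lemma measurable_besselHeatKernel (lam x : ℝ) :
    Measurable (fun p : ℝ × ℝ => besselHeatKernel lam p.1 x p.2) := by
  have hI : Measurable (besselI (lam - 1 / 2)) := Measurable.tsum fun k => by fun_prop
  unfold besselHeatKernel
  fun_prop

/-! ### Poisson means -/

/-- The mean of the sequence `a` under the Poisson distribution with parameter `X`. -/
def poissonMean (a : ℕ → ℝ) (X : ℝ) : ℝ := exp (-X) * ∑' k, a k * (X ^ k / k !)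

lemma poissonMean_const (c X : ℝ) : poissonMean (fun _ => c) X = c := by
  have hexp : ∑' k : ℕ, X ^ k / (k ! : ℝ) = exp X := by
    rw [exp_eq_exp_ℝ]
    exact (NormedSpace.expSeries_div_hasSum_exp X).tsum_eq
  rw [poissonMean, tsum_mul_left, hexp, mul_left_comm, ← exp_add, neg_add_cancel, exp_zero, mul_one]

lemma poissonMean_const_mul (c : ℝ) (a : ℕ → ℝ) (X : ℝ) :
    poissonMean (fun k => c * a k) X = c * poissonMean a X := by
  simp only [poissonMean, mul_assoc, tsum_mul_left]
  ring

lemma summable_mul_pow_div_factorial {a : ℕ → ℝ} {B : ℝ} (ha : ∀ k, |a k| ≤ B) (X : ℝ) :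
    Summable fun k => a k * (X ^ k / k !) :=
  Summable.of_norm_bounded ((summable_pow_div_factorial X).norm.mul_left B) fun k => by
    rw [norm_mul, norm_eq_abs]
    gcongr
    exact ha k

lemma hasDerivAt_tsum_mul_pow_div_factorial {a : ℕ → ℝ} {B : ℝ} (ha : ∀ k, |a k| ≤ B) (X : ℝ) :
    HasDerivAt (fun Y => ∑' k, a k * (Y ^ k / k !)) (∑' k, a (k + 1) * (X ^ k / k !)) X := by
  have hB : 0 ≤ B := (abs_nonneg _).trans (ha 0)
  have hterm : ∀ (k : ℕ) (Y : ℝ),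
      HasDerivAt (fun Y => a (k + 1) * (Y ^ (k + 1) / (k + 1)!)) (a (k + 1) * (Y ^ k / k !)) Y :=
    fun k Y => by
      refine (((hasDerivAt_pow (k + 1) Y).div_const ((k + 1)! : ℝ)).const_mul
        (a (k + 1))).congr_deriv ?_
      rw [Nat.factorial_succ, Nat.add_sub_cancel]
      push_cast
      field_simp
  have htail : HasDerivAt (fun Y => ∑' k, a (k + 1) * (Y ^ (k + 1) / (k + 1)!))
      (∑' k, a (k + 1) * (X ^ k / k !)) X := by
    refine hasDerivAt_tsum_of_isPreconnected
      ((summable_pow_div_factorial (|X| + 1)).mul_left B) Metric.isOpen_ball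
      (convex_ball (0 : ℝ) (|X| + 1)).isPreconnected (fun k Y _ => hterm k Y) (fun k Y hY => ?_)
      (y₀ := X) ?_ ((summable_nat_add_iff 1).2 (summable_mul_pow_div_factorial ha X)) ?_
    · rw [norm_mul, norm_div, norm_pow, Real.norm_natCast]
      have hY' : ‖Y‖ ≤ |X| + 1 := (mem_ball_zero_iff.1 hY).le
      gcongr
      exact ha _
    all_goals simp
  refine (htail.const_add (a 0)).congr_of_eventuallyEq (.of_forall fun Y => ?_)
  simpa using (summable_mul_pow_div_factorial ha Y).tsum_eq_zero_add

lemma hasDerivAt_poissonMean {a : ℕ → ℝ} {B : ℝ} (ha : ∀ k, |a k| ≤ B) (X : ℝ) :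
    HasDerivAt (poissonMean a) (poissonMean (fun k => a (k + 1) - a k) X) X := by
  refine ((hasDerivAt_neg X).exp.mul (hasDerivAt_tsum_mul_pow_div_factorial ha X)).congr_deriv ?_
  have hshift := summable_mul_pow_div_factorial (fun k => ha (k + 1)) X
  simp only [poissonMean, sub_mul]
  rw [hshift.tsum_sub (summable_mul_pow_div_factorial ha X)]
  ring

/-! ### Moment expansion of the heat operator at time `1/4` -/

lemma integrableOn_rpow_mul_exp_neg_sq {p : ℝ} (hp : -1 < p) :
    IntegrableOn (fun y : ℝ => y ^ p * exp (-y ^ 2)) (Ioi 0) := by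
  simpa [rpow_two] using integrableOn_rpow_mul_exp_neg_rpow (p := 2) hp (by norm_num)

lemma integral_rpow_mul_exp_neg_sq {p : ℝ} (hp : -1 < p) :
    ∫ y in Ioi (0 : ℝ), y ^ p * exp (-y ^ 2) = Gamma ((p + 1) / 2) / 2 := by
  have h := integral_rpow_mul_exp_neg_rpow (p := 2) (q := p) (by norm_num) hp
  simp only [rpow_two] at h
  rw [h]
  ring

lemma Gamma_add_natCast_div_le {a b : ℝ} (ha : 0 < a) (hab : a ≤ b) (k : ℕ) :
    Gamma (a + k) / Gamma (b + k) ≤ Gamma a / Gamma b := by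
  induction k with
  | zero => simp
  | succ k ih =>
    have hak : 0 < a + k := by positivity
    have hbk : 0 < b + k := by linarith
    have := Gamma_pos_of_pos hak
    have := Gamma_pos_of_pos hbk
    push_cast
    rw [← add_assoc, ← add_assoc, Gamma_add_one hak.ne', Gamma_add_one hbk.ne', mul_div_mul_comm]
    exact (mul_le_of_le_one_left (by positivity) ((div_le_one hbk).2 (by linarith))).trans ih

/-- The density in `y` of the `k`-th moment functional: the heat kernel `W_{1/4}^λ(x, y)` is `x ^ λ`
times the Poisson mean, with parameter `x ^ 2`, of `momentWeight λ k y`. The normalization makes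
all moments of `y ^ λ` equal to `1`. -/
def momentWeight (lam : ℝ) (k : ℕ) (y : ℝ) : ℝ :=
  2 / Gamma (k + lam + 1 / 2) * (y ^ (2 * (k : ℝ) + lam) * exp (-y ^ 2))

/-- The moments of `g` against `momentWeight`. -/
def momentCoeff (lam : ℝ) (g : ℝ → ℝ) (k : ℕ) : ℝ :=
  ∫ y in Ioi (0 : ℝ), momentWeight lam k y * g y

section moments

variable {lam : ℝ}

lemma momentWeight_nonneg (hlam : 0 ≤ lam) (k : ℕ) {y : ℝ} (hy : 0 ≤ y) :
    0 ≤ momentWeight lam k y := by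
  have : 0 < Gamma (k + lam + 1 / 2) := Gamma_pos_of_pos (by positivity)
  unfold momentWeight
  positivity

lemma measurable_momentWeight (lam : ℝ) (k : ℕ) : Measurable (momentWeight lam k) := by
  unfold momentWeight
  fun_prop

lemma integrableOn_momentWeight (hlam : 0 ≤ lam) (k : ℕ) :
    IntegrableOn (momentWeight lam k) (Ioi 0) :=
  (integrableOn_rpow_mul_exp_neg_sq (by linarith [k.cast_nonneg (α := ℝ)])).const_mul _

lemma integral_momentWeight (hlam : 0 ≤ lam) (k : ℕ) :
    ∫ y in Ioi (0 : ℝ), momentWeight lam k y =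
      Gamma (k + lam / 2 + 1 / 2) / Gamma (k + lam + 1 / 2) := by
  simp only [momentWeight]
  rw [integral_const_mul, integral_rpow_mul_exp_neg_sq (by linarith [k.cast_nonneg (α := ℝ)]),
    show (2 * (k : ℝ) + lam + 1) / 2 = k + lam / 2 + 1 / 2 by ring]
  ring

lemma integral_momentWeight_le (hlam : 0 ≤ lam) (k : ℕ) :
    ∫ y in Ioi (0 : ℝ), momentWeight lam k y ≤
      Gamma (lam / 2 + 1 / 2) / Gamma (lam + 1 / 2) := by
  rw [integral_momentWeight hlam, show (k : ℝ) + lam / 2 + 1 / 2 = lam / 2 + 1 / 2 + k by ring,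
    show (k : ℝ) + lam + 1 / 2 = lam + 1 / 2 + k by ring]
  exact Gamma_add_natCast_div_le (by positivity) (by linarith) k

lemma momentWeight_mul_rpow (lam : ℝ) (k : ℕ) {y : ℝ} (hy : 0 < y) :
    momentWeight lam k y * y ^ lam =
      2 / Gamma (k + lam + 1 / 2) * (y ^ (2 * (k : ℝ) + lam + lam) * exp (-y ^ 2)) := by
  rw [momentWeight, rpow_add hy (2 * (k : ℝ) + lam)]
  ring

lemma integrableOn_momentWeight_mul_rpow (hlam : 0 ≤ lam) (k : ℕ) :
    IntegrableOn (fun y => momentWeight lam k y * y ^ lam) (Ioi 0) :=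
  IntegrableOn.congr_fun
    ((integrableOn_rpow_mul_exp_neg_sq (by linarith [k.cast_nonneg (α := ℝ)])).const_mul _)
    (fun _ hy => (momentWeight_mul_rpow lam k hy).symm) measurableSet_Ioi

lemma momentCoeff_rpow (hlam : 0 ≤ lam) (k : ℕ) : momentCoeff lam (fun y => y ^ lam) k = 1 := by
  have : 0 < Gamma (k + lam + 1 / 2) := Gamma_pos_of_pos (by positivity)
  rw [momentCoeff,
    setIntegral_congr_fun measurableSet_Ioi fun y hy => momentWeight_mul_rpow lam k hy,
    integral_const_mul, integral_rpow_mul_exp_neg_sq (by linarith [k.cast_nonneg (α := ℝ)]),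
    show (2 * (k : ℝ) + lam + lam + 1) / 2 = k + lam + 1 / 2 by ring]
  field_simp

variable {A : ℝ} {g : ℝ → ℝ}

lemma integrableOn_momentWeight_mul (hlam : 0 ≤ lam)
    (hm : AEStronglyMeasurable g (volume.restrict (Ioi 0)))
    (hg : ∀ y, 0 < y → |g y| ≤ A * (1 + y ^ lam)) (k : ℕ) :
    IntegrableOn (fun y => momentWeight lam k y * g y) (Ioi 0) := by
  refine Integrable.mono' (((integrableOn_momentWeight hlam k).add
    (integrableOn_momentWeight_mul_rpow hlam k)).const_mul A)
    ((measurable_momentWeight lam k).aestronglyMeasurable.mul hm) ?_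
  filter_upwards [ae_restrict_mem measurableSet_Ioi] with y hy
  have hw := momentWeight_nonneg hlam k (le_of_lt hy)
  rw [norm_mul, norm_eq_abs, norm_eq_abs, abs_of_nonneg hw]
  calc momentWeight lam k y * |g y| ≤ momentWeight lam k y * (A * (1 + y ^ lam)) := by
        gcongr
        exact hg y hy
    _ = A * (momentWeight lam k y + momentWeight lam k y * y ^ lam) := by ring

lemma integral_abs_momentWeight_mul_le (hlam : 0 ≤ lam) (hA : 0 ≤ A)
    (hm : AEStronglyMeasurable g (volume.restrict (Ioi 0)))
    (hg : ∀ y, 0 < y → |g y| ≤ A * (1 + y ^ lam)) (k : ℕ) :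
    ∫ y in Ioi (0 : ℝ), |momentWeight lam k y * g y| ≤
      A * (Gamma (lam / 2 + 1 / 2) / Gamma (lam + 1 / 2) + 1) := by
  have hw := integrableOn_momentWeight hlam k
  have hwy := integrableOn_momentWeight_mul_rpow hlam k
  calc ∫ y in Ioi (0 : ℝ), |momentWeight lam k y * g y|
      ≤ ∫ y in Ioi (0 : ℝ), A * (momentWeight lam k y + momentWeight lam k y * y ^ lam) := by
        refine setIntegral_mono_on (integrableOn_momentWeight_mul hlam hm hg k).abs
          ((hw.add hwy).const_mul A) measurableSet_Ioi fun y hy => ?_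
        have hw0 := momentWeight_nonneg hlam k (le_of_lt hy)
        rw [abs_mul, abs_of_nonneg hw0]
        linarith [mul_le_mul_of_nonneg_left (hg y hy) hw0]
    _ = A * ((∫ y in Ioi (0 : ℝ), momentWeight lam k y) +
          momentCoeff lam (fun y => y ^ lam) k) := by
        rw [integral_const_mul, integral_add hw hwy, momentCoeff]
    _ ≤ A * (Gamma (lam / 2 + 1 / 2) / Gamma (lam + 1 / 2) + 1) := by
        rw [momentCoeff_rpow hlam]
        gcongr
        exact integral_momentWeight_le hlam k

lemma abs_momentCoeff_le (hlam : 0 ≤ lam) (hA : 0 ≤ A)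
    (hm : AEStronglyMeasurable g (volume.restrict (Ioi 0)))
    (hg : ∀ y, 0 < y → |g y| ≤ A * (1 + y ^ lam)) (k : ℕ) :
    |momentCoeff lam g k| ≤ A * (Gamma (lam / 2 + 1 / 2) / Gamma (lam + 1 / 2) + 1) :=
  abs_integral_le_integral_abs.trans (integral_abs_momentWeight_mul_le hlam hA hm hg k)

lemma two_mul_besselTerm_mul_exp {x y : ℝ} (k : ℕ) (hx : 0 < x) (hy : 0 ≤ y) :
    2 * besselTerm lam k (x * y) * exp (-(x ^ 2) - y ^ 2) =
      x ^ lam * exp (-x ^ 2) * ((x ^ 2) ^ k / k !) * momentWeight lam k y := by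
  have hxpow : x ^ (2 * (k : ℝ) + lam) = (x ^ 2) ^ k * x ^ lam := by
    rw [rpow_add hx, show 2 * (k : ℝ) = ((2 * k : ℕ) : ℝ) by push_cast; ring, rpow_natCast, pow_mul]
  rw [besselTerm, momentWeight, mul_rpow hx.le hy, hxpow, sub_eq_add_neg, exp_add]
  field_simp

lemma heatSemigroup_quarter_eq_poissonMean (hlam : 0 ≤ lam) (hA : 0 ≤ A)
    (hm : AEStronglyMeasurable g (volume.restrict (Ioi 0)))
    (hg : ∀ y, 0 < y → |g y| ≤ A * (1 + y ^ lam)) {x : ℝ} (hx : 0 < x) :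
    heatSemigroup lam g (1 / 4) x = x ^ lam * poissonMean (momentCoeff lam g) (x ^ 2) := by
  set c : ℕ → ℝ := fun k => x ^ lam * exp (-x ^ 2) * ((x ^ 2) ^ k / k !)
  have hc0 : ∀ k, 0 ≤ c k := fun k => by positivity
  have hkernel : ∀ y ∈ Ioi (0 : ℝ),
      besselHeatKernel lam (1 / 4) x y * g y = ∑' k, c k * (momentWeight lam k y * g y) :=
    fun y hy => by
      rw [besselHeatKernel_quarter lam hx hy, ← tsum_mul_left, ← tsum_mul_right, ← tsum_mul_right]
      refine tsum_congr fun k => ?_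
      rw [two_mul_besselTerm_mul_exp k hx (le_of_lt hy), mul_assoc]
  have hsum : Summable fun k => ∫ y in Ioi (0 : ℝ), ‖c k * (momentWeight lam k y * g y)‖ := by
    have hcsum : Summable c := (summable_pow_div_factorial _).mul_left _
    refine Summable.of_nonneg_of_le (fun k => integral_nonneg fun y => norm_nonneg _)
      (fun k => ?_) (hcsum.mul_right (A * (Gamma (lam / 2 + 1 / 2) / Gamma (lam + 1 / 2) + 1)))
    simp only [norm_mul (c k), norm_eq_abs, abs_of_nonneg (hc0 k)]
    rw [integral_const_mul]
    exact mul_le_mul_of_nonneg_left (integral_abs_momentWeight_mul_le hlam hA hm hg k) (hc0 k)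
  have hswap := hasSum_integral_of_summable_integral_norm
    (fun k => (integrableOn_momentWeight_mul hlam hm hg k).const_mul (c k)) hsum
  rw [heatSemigroup, setIntegral_congr_fun measurableSet_Ioi hkernel, ← hswap.tsum_eq,
    poissonMean, ← mul_assoc, ← tsum_mul_left]
  refine tsum_congr fun k => ?_
  rw [integral_const_mul, momentCoeff]
  ring

lemma heatSemigroup_quarter_rpow (hlam : 0 ≤ lam) {x : ℝ} (hx : 0 < x) :
    heatSemigroup lam (fun y => y ^ lam) (1 / 4) x = x ^ lam := by
  rw [heatSemigroup_quarter_eq_poissonMean hlam zero_le_one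
    (by fun_prop : Measurable fun y : ℝ => y ^ lam).aestronglyMeasurable
    (fun y hy => by rw [abs_of_nonneg (by positivity)]; linarith) hx,
    funext (momentCoeff_rpow hlam), poissonMean_const, mul_one]

lemma integrableOn_besselHeatKernel_quarter_mul_rpow (hlam : 0 ≤ lam) {x : ℝ} (hx : 0 < x) :
    IntegrableOn (fun y => besselHeatKernel lam (1 / 4) x y * y ^ lam) (Ioi 0) :=
  not_imp_comm.1 integral_undef
    ((heatSemigroup_quarter_rpow hlam hx).trans_ne (rpow_pos_of_pos hx lam).ne')

end moments

/-! ### The intertwining relation and Lipschitz bounds at time `1/4` -/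

/-- The first order operator `D_λ g = g' - (λ / y) g = y ^ λ (y ^ (-λ) g)'`, which factors the
Bessel operator. -/
def besselDeriv (lam : ℝ) (g : ℝ → ℝ) (y : ℝ) : ℝ := deriv g y - lam / y * g y

section intertwining

variable {lam A B : ℝ} {g : ℝ → ℝ}

lemma measurable_besselDeriv (lam : ℝ) (hg : Measurable g) : Measurable (besselDeriv lam g) := by
  have := measurable_deriv g
  unfold besselDeriv
  fun_prop

lemma momentWeight_succ (lam : ℝ) (k : ℕ) {y : ℝ} (hy : 0 < y) :
    momentWeight lam (k + 1) y = y * momentWeight (lam + 1) k y := by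
  rw [momentWeight, momentWeight, show ((k + 1 : ℕ) : ℝ) + lam + 1 / 2 = k + (lam + 1) + 1 / 2 by
      push_cast; ring,
    show 2 * ((k + 1 : ℕ) : ℝ) + lam = 2 * k + (lam + 1) + 1 by push_cast; ring,
    rpow_add_one hy.ne']
  ring

lemma momentWeight_eq_div_mul (hlam : 0 ≤ lam) (k : ℕ) {y : ℝ} (hy : 0 < y) :
    momentWeight lam k y = (k + lam + 1 / 2) / y * momentWeight (lam + 1) k y := by
  have hc : 0 < (k : ℝ) + lam + 1 / 2 := by positivity
  have := Gamma_pos_of_pos hc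
  rw [momentWeight, momentWeight,
    show (k : ℝ) + (lam + 1) + 1 / 2 = k + lam + 1 / 2 + 1 by ring, Gamma_add_one hc.ne',
    show 2 * (k : ℝ) + (lam + 1) = 2 * k + lam + 1 by ring, rpow_add_one hy.ne']
  field_simp

lemma hasDerivAt_momentWeight (hlam : 0 ≤ lam) (k : ℕ) {y : ℝ} (hy : 0 < y) :
    HasDerivAt (momentWeight (lam + 1) k)
      (2 * (momentWeight lam k y - momentWeight lam (k + 1) y) -
        lam / y * momentWeight (lam + 1) k y) y := by
  have hpow := hasDerivAt_rpow_const (x := y) (p := 2 * (k : ℝ) + (lam + 1)) (.inl hy.ne')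
  have hexp := (hasDerivAt_pow 2 y).neg.exp
  refine ((hpow.mul hexp).const_mul (2 / Gamma (k + (lam + 1) + 1 / 2))).congr_deriv ?_
  rw [momentWeight_succ lam k hy, momentWeight_eq_div_mul hlam k hy, momentWeight,
    rpow_sub_one hy.ne']
  simp only [Pi.neg_apply]
  field_simp
  ring

lemma continuous_momentWeight {lam : ℝ} (hlam : 0 ≤ lam) (k : ℕ) :
    Continuous (momentWeight lam k) := by
  have := continuous_rpow_const (q := 2 * (k : ℝ) + lam) (by positivity)
  unfold momentWeight
  fun_prop

lemma nonneg_of_abs_le_mul_one_add_rpow (hgA : ∀ y, 0 < y → |g y| ≤ A * (1 + y ^ lam)) :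
    0 ≤ A := by
  have h := (abs_nonneg _).trans (hgA 1 one_pos)
  rw [one_rpow] at h
  linarith

lemma one_add_rpow_le (hlam : 0 ≤ lam) {y : ℝ} (hy : 0 ≤ y) :
    1 + y ^ lam ≤ 2 * (1 + y ^ (lam + 1)) := by
  have : 0 ≤ y ^ (lam + 1) := rpow_nonneg hy _
  rcases le_total y 1 with h | h
  · linarith [rpow_le_one hy h hlam]
  · linarith [rpow_le_rpow_of_exponent_le h (le_add_of_nonneg_right zero_le_one : lam ≤ lam + 1)]

lemma momentCoeff_succ_sub (hlam : 0 < lam) (hg : Differentiable ℝ g)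
    (hgA : ∀ y, 0 < y → |g y| ≤ A * (1 + y ^ lam))
    (hgB : ∀ y, 0 < y → |besselDeriv lam g y| ≤ B * (1 + y ^ (lam + 1))) (k : ℕ) :
    momentCoeff lam g (k + 1) - momentCoeff lam g k =
      momentCoeff (lam + 1) (besselDeriv lam g) k / 2 := by
  have hA : 0 ≤ A := nonneg_of_abs_le_mul_one_add_rpow hgA
  have hm : AEStronglyMeasurable g (volume.restrict (Ioi 0)) :=
    hg.continuous.aestronglyMeasurable
  have hm' : AEStronglyMeasurable (besselDeriv lam g) (volume.restrict (Ioi 0)) :=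
    (measurable_besselDeriv lam hg.continuous.measurable).aestronglyMeasurable
  have hint := integrableOn_momentWeight_mul hlam.le hm hgA
  have hint' := integrableOn_momentWeight_mul (by positivity) hm' hgB k
  set F : ℝ → ℝ := fun y => momentWeight (lam + 1) k y * g y with hF
  set F' : ℝ → ℝ := fun y => 2 * (momentWeight lam k y * g y - momentWeight lam (k + 1) y * g y) +
    momentWeight (lam + 1) k y * besselDeriv lam g y with hF'
  have hderiv : ∀ y ∈ Ioi (0 : ℝ), HasDerivAt F (F' y) y := fun y hy => by
    refine ((hasDerivAt_momentWeight hlam.le k hy).mul (hg y).hasDerivAt).congr_deriv ?_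
    simp only [hF', besselDeriv]
    ring
  have hdiff := ((hint k).sub (hint (k + 1))).const_mul 2
  have hF'int : IntegrableOn F' (Ioi 0) := hdiff.add hint'
  have hFint : IntegrableOn F (Ioi 0) :=
    integrableOn_momentWeight_mul (by positivity) hm
      (A := A * 2) (fun y hy => (hgA y hy).trans (by
        rw [mul_assoc]
        exact mul_le_mul_of_nonneg_left (one_add_rpow_le hlam.le (le_of_lt hy)) hA)) k
  have hFcont : Continuous F := (continuous_momentWeight (by positivity) k).mul hg.continuous
  have hF0 : F 0 = 0 := by
    simp [hF, momentWeight, zero_rpow (by positivity : 2 * (k : ℝ) + (lam + 1) ≠ 0)]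
  have hibp : ∫ y in Ioi (0 : ℝ), F' y = 0 := by
    rw [integral_Ioi_of_hasDerivAt_of_tendsto hFcont.continuousWithinAt hderiv hF'int
      (tendsto_zero_of_hasDerivAt_of_integrableOn_Ioi hderiv hF'int hFint), hF0, sub_zero]
  have hsplit : ∫ y in Ioi (0 : ℝ), F' y =
      2 * (momentCoeff lam g k - momentCoeff lam g (k + 1)) +
        momentCoeff (lam + 1) (besselDeriv lam g) k := by
    refine (integral_add hdiff hint').trans ?_
    simp only [Pi.sub_apply]
    rw [integral_const_mul, integral_sub (hint k) (hint (k + 1))]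
    rfl
  linarith

lemma hasDerivAt_heatSemigroup_quarter (hlam : 0 < lam) (hg : Differentiable ℝ g)
    (hgA : ∀ y, 0 < y → |g y| ≤ A * (1 + y ^ lam))
    (hgB : ∀ y, 0 < y → |besselDeriv lam g y| ≤ B * (1 + y ^ (lam + 1))) {x : ℝ} (hx : 0 < x) :
    HasDerivAt (heatSemigroup lam g (1 / 4))
      (lam / x * heatSemigroup lam g (1 / 4) x +
        heatSemigroup (lam + 1) (besselDeriv lam g) (1 / 4) x) x := by
  have hA : 0 ≤ A := nonneg_of_abs_le_mul_one_add_rpow hgA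
  have hB : 0 ≤ B := nonneg_of_abs_le_mul_one_add_rpow hgB
  have hm : AEStronglyMeasurable g (volume.restrict (Ioi 0)) :=
    hg.continuous.aestronglyMeasurable
  have hm' : AEStronglyMeasurable (besselDeriv lam g) (volume.restrict (Ioi 0)) :=
    (measurable_besselDeriv lam hg.continuous.measurable).aestronglyMeasurable
  have hexpand : ∀ z, 0 < z →
      heatSemigroup lam g (1 / 4) z = z ^ lam * poissonMean (momentCoeff lam g) (z ^ 2) :=
    fun z hz => heatSemigroup_quarter_eq_poissonMean hlam.le hA hm hgA hz
  have hdiff : (fun k => momentCoeff lam g (k + 1) - momentCoeff lam g k) =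
      fun k => (1 / 2) * momentCoeff (lam + 1) (besselDeriv lam g) k :=
    funext fun k => by rw [momentCoeff_succ_sub hlam hg hgA hgB]; ring
  have hmean := (hasDerivAt_poissonMean (abs_momentCoeff_le hlam.le hA hm hgA) (x ^ 2)).comp x
    (hasDerivAt_pow 2 x)
  rw [hdiff, poissonMean_const_mul] at hmean
  refine (((hasDerivAt_rpow_const (.inl hx.ne')).mul hmean).congr_of_eventuallyEq
    (eventually_of_mem (Ioi_mem_nhds hx) hexpand)).congr_deriv ?_
  rw [hexpand x hx, heatSemigroup_quarter_eq_poissonMean (by positivity) hB hm' hgB hx,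
    rpow_sub_one hx.ne', rpow_add_one hx.ne', Function.comp_apply]
  field_simp
  ring

end intertwining

lemma integrable_exp_neg_sub_sq_div_two (x : ℝ) : Integrable fun y => exp (-(x - y) ^ 2 / 2) := by
  refine ((integrable_exp_neg_mul_sq one_half_pos).comp_sub_left x).congr (ae_of_all _ fun y => ?_)
  ring_nf

lemma integral_Ioi_exp_neg_sub_sq_div_two_le (x : ℝ) :
    ∫ y in Ioi (0 : ℝ), exp (-(x - y) ^ 2 / 2) ≤ √(2 * π) :=
  calc ∫ y in Ioi (0 : ℝ), exp (-(x - y) ^ 2 / 2) ≤ ∫ y, exp (-(x - y) ^ 2 / 2) :=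
        setIntegral_le_integral (integrable_exp_neg_sub_sq_div_two x)
          (ae_of_all _ fun y => (exp_pos _).le)
    _ = ∫ y, exp (-(1 / 2) * y ^ 2) := by
        rw [← integral_sub_left_eq_self (fun y => exp (-(1 / 2) * y ^ 2)) volume x]
        ring_nf
    _ = √(2 * π) := by rw [integral_gaussian]; ring_nf

section quarter

variable {lam A x : ℝ} {f : ℝ → ℝ}

lemma exists_norm_besselHeatKernel_quarter_mul_le (hlam : 1 ≤ lam) :
    ∃ C : ℝ, 0 < C ∧ ∀ {A x y r : ℝ}, 0 < x → 0 < y → |r| ≤ A * exp ((x - y) ^ 2 / 2) →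
      ‖besselHeatKernel lam (1 / 4) x y * r‖ ≤ C * A * exp (-(x - y) ^ 2 / 2) := by
  obtain ⟨C, hC, hdom⟩ := exists_besselHeatKernel_quarter_le hlam
  refine ⟨C, hC, fun {A x y r} hx hy hr => ?_⟩
  have hW := besselHeatKernel_nonneg (zero_le_one.trans hlam) (by norm_num : (0 : ℝ) < 1 / 4) hx hy
  rw [norm_mul, norm_eq_abs, norm_eq_abs, abs_of_nonneg hW]
  calc besselHeatKernel lam (1 / 4) x y * |r|
      ≤ (C * exp (-(x - y) ^ 2)) * (A * exp ((x - y) ^ 2 / 2)) := by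
        have := (hdom x y hx hy).trans
          (mul_le_mul_of_nonneg_left (dirichletKernel_le_exp x y) hC.le)
        gcongr
    _ = C * A * exp (-(x - y) ^ 2 / 2) := by
        rw [mul_mul_mul_comm, ← exp_add]
        ring_nf

lemma integrableOn_besselHeatKernel_quarter_mul (hlam : 1 ≤ lam) (hx : 0 < x)
    (hm : AEStronglyMeasurable f (volume.restrict (Ioi 0)))
    (hf : ∀ y, 0 < y → |f y| ≤ A * exp ((x - y) ^ 2 / 2)) :
    IntegrableOn (fun y => besselHeatKernel lam (1 / 4) x y * f y) (Ioi 0) := by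
  obtain ⟨C, -, hbound⟩ := exists_norm_besselHeatKernel_quarter_mul_le hlam
  refine Integrable.mono' ((integrable_exp_neg_sub_sq_div_two x).integrableOn.const_mul (C * A))
    (((measurable_besselHeatKernel lam x).comp measurable_prodMk_left).aestronglyMeasurable.mul hm)
    ?_
  filter_upwards [ae_restrict_mem measurableSet_Ioi] with y hy
  exact hbound hx hy (hf y hy)

lemma exists_abs_heatSemigroup_quarter_le (hlam : 1 ≤ lam) :
    ∃ C : ℝ, 0 < C ∧ ∀ {A x : ℝ} {f : ℝ → ℝ}, 0 < x →
      (∀ y, 0 < y → |f y| ≤ A * exp ((x - y) ^ 2 / 2)) →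
      |heatSemigroup lam f (1 / 4) x| ≤ C * A := by
  obtain ⟨C, hC, hbound⟩ := exists_norm_besselHeatKernel_quarter_mul_le hlam
  refine ⟨C * √(2 * π), by positivity, fun {A x f} hx hf => ?_⟩
  have hA : 0 ≤ A := by simpa using (abs_nonneg _).trans (hf x hx)
  calc |heatSemigroup lam f (1 / 4) x| ≤ ∫ y in Ioi (0 : ℝ), C * A * exp (-(x - y) ^ 2 / 2) := by
        rw [heatSemigroup, ← norm_eq_abs]
        refine norm_integral_le_of_norm_le
          ((integrable_exp_neg_sub_sq_div_two x).integrableOn.const_mul _) ?_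
        filter_upwards [ae_restrict_mem measurableSet_Ioi] with y hy
        exact hbound hx hy (hf y hy)
    _ = C * A * ∫ y in Ioi (0 : ℝ), exp (-(x - y) ^ 2 / 2) := integral_const_mul _ _
    _ ≤ C * A * √(2 * π) := by gcongr; exact integral_Ioi_exp_neg_sub_sq_div_two_le x
    _ = C * √(2 * π) * A := by ring

lemma le_mul_exp_sq_div_two (hA : 0 ≤ A) (q : ℝ) : A ≤ A * exp (q ^ 2 / 2) :=
  le_mul_of_one_le_right hA (one_le_exp (by positivity))

lemma exists_abs_heatSemigroup_quarter_le_mul (hlam : 1 ≤ lam) :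
    ∃ C : ℝ, 0 < C ∧ ∀ {A x : ℝ} {f : ℝ → ℝ}, 0 < x → (∀ y, 0 < y → |f y| ≤ A * (x + y)) →
      |heatSemigroup lam f (1 / 4) x| ≤ C * (A * x) := by
  obtain ⟨C, hC, hdom⟩ := exists_besselHeatKernel_quarter_le hlam
  obtain ⟨C₁, hC₁, hone⟩ := exists_abs_heatSemigroup_quarter_le le_rfl
  refine ⟨C * (C₁ + 1), by positivity, fun {A x f} hx hf => ?_⟩
  have hA : 0 ≤ A :=
    nonneg_of_mul_nonneg_left ((abs_nonneg _).trans (hf x hx)) (add_pos hx hx)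
  have hconst : |heatSemigroup 1 (fun _ => x) (1 / 4) x| ≤ C₁ * x :=
    hone hx fun y _ => by
      rw [abs_of_pos hx]
      exact le_mul_exp_sq_div_two hx.le _
  have hint : IntegrableOn (fun y => besselHeatKernel 1 (1 / 4) x y * x) (Ioi 0) :=
    integrableOn_besselHeatKernel_quarter_mul le_rfl hx aestronglyMeasurable_const fun y _ => by
      rw [abs_of_pos hx]
      exact le_mul_exp_sq_div_two hx.le _
  have hint' : IntegrableOn (fun y => besselHeatKernel 1 (1 / 4) x y * y) (Ioi 0) := by
    simpa only [rpow_one] using integrableOn_besselHeatKernel_quarter_mul_rpow zero_le_one hx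
  have hid : heatSemigroup 1 (fun y => y) (1 / 4) x = x := by
    simpa only [rpow_one] using heatSemigroup_quarter_rpow zero_le_one hx
  calc |heatSemigroup lam f (1 / 4) x|
      ≤ ∫ y in Ioi (0 : ℝ), C * A * (besselHeatKernel 1 (1 / 4) x y * x +
          besselHeatKernel 1 (1 / 4) x y * y) := by
        rw [heatSemigroup, ← norm_eq_abs]
        refine norm_integral_le_of_norm_le ((hint.add hint').const_mul _) ?_
        filter_upwards [ae_restrict_mem measurableSet_Ioi] with y hy
        have hW := besselHeatKernel_nonneg (zero_le_one.trans hlam)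
          (by norm_num : (0 : ℝ) < 1 / 4) hx hy
        have hle := hdom x y hx hy
        rw [← besselHeatKernel_one_quarter hx hy] at hle
        rw [norm_mul, norm_eq_abs, norm_eq_abs, abs_of_nonneg hW]
        calc besselHeatKernel lam (1 / 4) x y * |f y|
            ≤ (C * besselHeatKernel 1 (1 / 4) x y) * (A * (x + y)) :=
              mul_le_mul hle (hf y hy) (abs_nonneg _) (hW.trans hle)
          _ = C * A * (besselHeatKernel 1 (1 / 4) x y * x +
                besselHeatKernel 1 (1 / 4) x y * y) := by ring
    _ = C * A * (heatSemigroup 1 (fun _ => x) (1 / 4) x + x) := by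
        rw [integral_const_mul, integral_add hint hint']
        congr 2
    _ ≤ C * A * (C₁ * x + x) := by
        gcongr
        exact (le_abs_self _).trans hconst
    _ = C * (C₁ + 1) * (A * x) := by ring

end quarter

lemma abs_le_mul_of_abs_deriv_le {L : ℝ} {g : ℝ → ℝ} (hg : Differentiable ℝ g) (hg0 : g 0 = 0)
    (hL : ∀ y, |deriv g y| ≤ L) {y : ℝ} (hy : 0 ≤ y) : |g y| ≤ L * y := by
  simpa [hg0, abs_of_nonneg hy] using convex_univ.norm_image_sub_le_of_norm_deriv_le
    (fun y _ => hg y) (fun y _ => hL y) (mem_univ (0 : ℝ)) (mem_univ y)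

lemma abs_besselDeriv_le {lam L y : ℝ} {g : ℝ → ℝ} (hlam : 0 ≤ lam) (hy : 0 < y)
    (hderiv : |deriv g y| ≤ L) (hg : |g y| ≤ L * y) : |besselDeriv lam g y| ≤ (1 + lam) * L :=
  calc |besselDeriv lam g y| ≤ |deriv g y| + |lam / y * g y| := abs_sub _ _
    _ ≤ L + lam / y * (L * y) := by
        rw [abs_mul, abs_of_nonneg (div_nonneg hlam hy.le)]
        gcongr
    _ = (1 + lam) * L := by field_simp

lemma self_le_one_add_rpow {p y : ℝ} (hp : 1 ≤ p) (hy : 0 ≤ y) : y ≤ 1 + y ^ p := by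
  rcases le_total y 1 with h | h
  · exact h.trans (le_add_of_nonneg_right (rpow_nonneg hy _))
  · exact (self_le_rpow_of_one_le h hp).trans (le_add_of_nonneg_left zero_le_one)

lemma exists_abs_heatSemigroup_quarter_sub_le_of_abs_deriv_le {lam : ℝ} (hlam : 1 ≤ lam) :
    ∃ C : ℝ, 0 < C ∧ ∀ {L : ℝ} {g : ℝ → ℝ}, Differentiable ℝ g → g 0 = 0 →
      (∀ y, |deriv g y| ≤ L) → ∀ {x₁ x₂ : ℝ}, 0 < x₁ → 0 < x₂ →
      |heatSemigroup lam g (1 / 4) x₁ - heatSemigroup lam g (1 / 4) x₂| ≤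
        C * L * |x₁ - x₂| := by
  obtain ⟨C, hC, hlin⟩ := exists_abs_heatSemigroup_quarter_le_mul hlam
  obtain ⟨C', hC', hbdd⟩ := exists_abs_heatSemigroup_quarter_le (hlam.trans (le_add_of_nonneg_right
    zero_le_one : lam ≤ lam + 1))
  have hlam0 : 0 < lam := by linarith
  refine ⟨lam * C + C' * (1 + lam), by positivity, fun {L g} hg hg0 hL x₁ x₂ hx₁ hx₂ => ?_⟩
  have hL0 : 0 ≤ L := (abs_nonneg _).trans (hL 0)
  have hgL : ∀ y, 0 < y → |g y| ≤ L * y := fun y hy => abs_le_mul_of_abs_deriv_le hg hg0 hL hy.le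
  have hDL : ∀ y, 0 < y → |besselDeriv lam g y| ≤ (1 + lam) * L := fun y hy =>
    abs_besselDeriv_le hlam0.le hy (hL y) (hgL y hy)
  have hderiv : ∀ x, 0 < x → HasDerivAt (heatSemigroup lam g (1 / 4))
      (lam / x * heatSemigroup lam g (1 / 4) x +
        heatSemigroup (lam + 1) (besselDeriv lam g) (1 / 4) x) x := fun x hx => by
    refine hasDerivAt_heatSemigroup_quarter (A := L) (B := (1 + lam) * L) hlam0 hg
      (fun y hy => (hgL y hy).trans ?_) (fun y hy => (hDL y hy).trans ?_) hx
    · gcongr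
      exact self_le_one_add_rpow hlam hy.le
    · exact le_mul_of_one_le_right (by positivity)
        (le_add_of_nonneg_right (rpow_nonneg hy.le _))
  have hbound : ∀ x, 0 < x → ‖lam / x * heatSemigroup lam g (1 / 4) x +
      heatSemigroup (lam + 1) (besselDeriv lam g) (1 / 4) x‖ ≤
        (lam * C + C' * (1 + lam)) * L := fun x hx =>
    calc _ ≤ lam / x * |heatSemigroup lam g (1 / 4) x| +
          |heatSemigroup (lam + 1) (besselDeriv lam g) (1 / 4) x| := by
          refine (abs_add_le _ _).trans_eq ?_
          rw [abs_mul, abs_of_pos (div_pos hlam0 hx)]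
      _ ≤ lam / x * (C * (L * x)) + C' * ((1 + lam) * L) := by
          gcongr
          · exact hlin hx fun y hy => (hgL y hy).trans (by gcongr; linarith)
          · exact hbdd hx fun y hy =>
              (hDL y hy).trans (le_mul_exp_sq_div_two (by positivity) _)
      _ = (lam * C + C' * (1 + lam)) * L := by field_simp
  exact (convex_Ioi (0 : ℝ)).norm_image_sub_le_of_norm_hasDerivWithin_le
    (fun x hx => (hderiv x hx).hasDerivWithinAt) hbound hx₂ hx₁

lemma heatSemigroup_const_mul (lam c t x : ℝ) (f : ℝ → ℝ) :
    heatSemigroup lam (fun y => c * f y) t x = c * heatSemigroup lam f t x := by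
  simp only [heatSemigroup, mul_left_comm _ c, integral_const_mul]

lemma heatSemigroup_sub {lam t x : ℝ} {f g : ℝ → ℝ}
    (hf : IntegrableOn (fun y => besselHeatKernel lam t x y * f y) (Ioi 0))
    (hg : IntegrableOn (fun y => besselHeatKernel lam t x y * g y) (Ioi 0)) :
    heatSemigroup lam (fun y => f y - g y) t x =
      heatSemigroup lam f t x - heatSemigroup lam g t x := by
  simp only [heatSemigroup, mul_sub]
  exact integral_sub hf hg

lemma rpow_le_rpow_sub_one_mul_add {α x y : ℝ} (hα0 : 0 ≤ α) (hα1 : α ≤ 1) (hx : 0 < x)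
    (hy : 0 ≤ y) : y ^ α ≤ x ^ (α - 1) * (x + y) :=
  have hxy : 0 < x + y := by positivity
  calc y ^ α ≤ (x + y) ^ α := rpow_le_rpow hy (le_add_of_nonneg_left hx.le) hα0
    _ = (x + y) ^ (α - 1) * (x + y) := by rw [rpow_sub_one hxy.ne', div_mul_cancel₀ _ hxy.ne']
    _ ≤ x ^ (α - 1) * (x + y) := by
        gcongr ?_ * _
        exact rpow_le_rpow_of_nonpos hx (le_add_of_nonneg_right hy) (sub_nonpos.2 hα1)

lemma add_le_mul_exp_sub_sq_div_two {x : ℝ} (hx : 0 ≤ x) (y : ℝ) :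
    x + y ≤ (2 * x + 1) * exp ((x - y) ^ 2 / 2) :=
  calc x + y ≤ 2 * x + ((x - y) ^ 2 / 2 + 1) := by nlinarith [sq_nonneg (x - y + 1)]
    _ ≤ 2 * x * exp ((x - y) ^ 2 / 2) + exp ((x - y) ^ 2 / 2) :=
        add_le_add (le_mul_exp_sq_div_two (by positivity) _) (add_one_le_exp _)
    _ = (2 * x + 1) * exp ((x - y) ^ 2 / 2) := by ring

section growth

variable {lam α : ℝ}

lemma integrableOn_besselHeatKernel_quarter_mul_of_abs_le_rpow {N x : ℝ} {f : ℝ → ℝ}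
    (hlam : 1 ≤ lam) (hα0 : 0 ≤ α) (hα1 : α ≤ 1) (hx : 0 < x)
    (hm : AEStronglyMeasurable f (volume.restrict (Ioi 0)))
    (hf : ∀ y, 0 < y → |f y| ≤ N * y ^ α) :
    IntegrableOn (fun y => besselHeatKernel lam (1 / 4) x y * f y) (Ioi 0) := by
  have hN : 0 ≤ N := by simpa using (abs_nonneg _).trans (hf 1 one_pos)
  refine integrableOn_besselHeatKernel_quarter_mul (A := N * (x ^ (α - 1) * (2 * x + 1))) hlam hx hm
    fun y hy => ?_
  calc |f y| ≤ N * y ^ α := hf y hy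
    _ ≤ N * (x ^ (α - 1) * ((2 * x + 1) * exp ((x - y) ^ 2 / 2))) := by
        gcongr
        refine (rpow_le_rpow_sub_one_mul_add hα0 hα1 hx hy.le).trans ?_
        gcongr
        exact add_le_mul_exp_sub_sq_div_two hx.le y
    _ = N * (x ^ (α - 1) * (2 * x + 1)) * exp ((x - y) ^ 2 / 2) := by ring

lemma exists_abs_heatSemigroup_quarter_le_rpow (hlam : 1 ≤ lam) (hα0 : 0 ≤ α) (hα1 : α ≤ 1) :
    ∃ C : ℝ, 0 < C ∧ ∀ {N x : ℝ} {f : ℝ → ℝ}, 0 < x → (∀ y, 0 < y → |f y| ≤ N * y ^ α) →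
      |heatSemigroup lam f (1 / 4) x| ≤ C * N * x ^ α := by
  obtain ⟨C, hC, hlin⟩ := exists_abs_heatSemigroup_quarter_le_mul hlam
  refine ⟨C, hC, fun {N x f} hx hf => ?_⟩
  have hN : 0 ≤ N := by simpa using (abs_nonneg _).trans (hf 1 one_pos)
  calc |heatSemigroup lam f (1 / 4) x| ≤ C * (N * x ^ (α - 1) * x) :=
        hlin hx fun y hy => (hf y hy).trans <| by
          rw [mul_assoc]
          gcongr
          exact rpow_le_rpow_sub_one_mul_add hα0 hα1 hx hy.le
    _ = C * N * x ^ α := by rw [rpow_sub_one hx.ne']; field_simp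

end growth

lemma abs_rpow_sub_one_le {μ r : ℝ} (hμ : 1 ≤ μ) (hr : 0 ≤ r) :
    |r ^ μ - 1| ≤ μ * (1 + |r - 1|) ^ (μ - 1) * |r - 1| := by
  have hderiv : ∀ t ∈ Icc 0 (1 + |r - 1|), ‖μ * t ^ (μ - 1)‖ ≤ μ * (1 + |r - 1|) ^ (μ - 1) :=
    fun t ht => by
      rw [norm_of_nonneg (by have := ht.1; positivity)]
      gcongr
      exacts [ht.1, ht.2]
  simpa using (convex_Icc 0 (1 + |r - 1|)).norm_image_sub_le_of_norm_hasDerivWithin_le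
    (fun t _ => (hasDerivAt_rpow_const (.inr hμ)).hasDerivWithinAt) hderiv
    (show (1 : ℝ) ∈ Icc 0 (1 + |r - 1|) from ⟨zero_le_one, le_add_of_nonneg_right (abs_nonneg _)⟩)
    (show r ∈ Icc 0 (1 + |r - 1|) from ⟨hr, by linarith [le_abs_self (r - 1)]⟩)

lemma one_add_rpow_le_exp {q μ : ℝ} (hq : 0 ≤ q) (hμ : 0 ≤ μ) :
    (1 + q) ^ μ ≤ exp (μ ^ 2 / 2) * exp (q ^ 2 / 2) :=
  calc (1 + q) ^ μ ≤ exp q ^ μ := by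
        gcongr
        rw [add_comm]
        exact add_one_le_exp q
    _ = exp (q * μ) := (exp_mul q μ).symm
    _ ≤ exp (μ ^ 2 / 2 + q ^ 2 / 2) := exp_le_exp.2 (by nlinarith [sq_nonneg (q - μ)])
    _ = exp (μ ^ 2 / 2) * exp (q ^ 2 / 2) := exp_add _ _

section holder

variable {lam : ℝ} {N α : ℝ≥0} {u : ℝ → ℝ}

lemma abs_sub_le_of_holderWith (hu : HolderWith N α u) (x y : ℝ) :
    |u x - u y| ≤ N * |x - y| ^ (α : ℝ) :=
  hu.dist_le x y

lemma abs_le_of_holderWith (hu : HolderWith N α u) (hu0 : u 0 = 0) {y : ℝ} (hy : 0 ≤ y) :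
    |u y| ≤ N * y ^ (α : ℝ) := by
  simpa [hu0, abs_of_nonneg hy] using abs_sub_le_of_holderWith hu y 0

lemma abs_sub_mul_rpow_le_of_holderWith (hu : HolderWith N α u) (hu0 : u 0 = 0) (hα1 : α ≤ 1)
    (hlam : 1 ≤ lam) {x y : ℝ} (hx : 1 ≤ x) (hy : 0 < y) :
    |u y - u x * (y / x) ^ lam| ≤ (1 + lam) * N * (1 + |x - y|) ^ lam := by
  have hx0 : 0 < x := by positivity
  have hα1' : (α : ℝ) ≤ 1 := mod_cast hα1
  set q := |x - y| with hq
  have hq0 : 0 ≤ q := abs_nonneg _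
  have hratio : |y / x - 1| = q / x := by
    rw [div_sub_one hx0.ne', abs_div, abs_of_pos hx0, abs_sub_comm]
  have hdiff : |u y - u x| ≤ N * (1 + q) ^ lam := by
    refine (abs_sub_le_of_holderWith hu y x).trans ?_
    rw [abs_sub_comm, ← hq]
    gcongr ?_ * ?_
    calc q ^ (α : ℝ) ≤ (1 + q) ^ (α : ℝ) := by gcongr; linarith
      _ ≤ (1 + q) ^ lam := rpow_le_rpow_of_exponent_le (by linarith) (by linarith)
  have hpow : |u x| * |(y / x) ^ lam - 1| ≤ lam * N * (1 + q) ^ lam :=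
    calc |u x| * |(y / x) ^ lam - 1| ≤ (N * x) * (lam * (1 + q) ^ (lam - 1) * (q / x)) := by
          refine mul_le_mul ((abs_le_of_holderWith hu hu0 hx0.le).trans ?_) ?_ (abs_nonneg _)
            (by positivity)
          · gcongr
            simpa using rpow_le_rpow_of_exponent_le hx hα1'
          · refine (abs_rpow_sub_one_le hlam (div_pos hy hx0).le).trans ?_
            rw [hratio]
            gcongr
            exact div_le_self hq0 hx
      _ = lam * N * ((1 + q) ^ (lam - 1) * q) := by field_simp
      _ ≤ lam * N * ((1 + q) ^ (lam - 1) * (1 + q)) := by gcongr; linarith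
      _ = lam * N * (1 + q) ^ lam := by
          rw [rpow_sub_one (by positivity), div_mul_cancel₀ _ (by positivity)]
  calc |u y - u x * (y / x) ^ lam| = |(u y - u x) - u x * ((y / x) ^ lam - 1)| := by ring_nf
    _ ≤ |u y - u x| + |u x| * |(y / x) ^ lam - 1| := (abs_sub _ _).trans_eq (by rw [abs_mul])
    _ ≤ (1 + lam) * N * (1 + q) ^ lam := by linarith

lemma integrableOn_besselHeatKernel_quarter_mul_of_holderWith (hlam : 1 ≤ lam) (hα0 : 0 < α)
    (hα1 : α ≤ 1) (hu : HolderWith N α u) (hu0 : u 0 = 0) {x : ℝ} (hx : 0 < x) :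
    IntegrableOn (fun y => besselHeatKernel lam (1 / 4) x y * u y) (Ioi 0) :=
  integrableOn_besselHeatKernel_quarter_mul_of_abs_le_rpow hlam α.coe_nonneg (mod_cast hα1) hx
    (hu.continuous hα0).aestronglyMeasurable fun _ hy => abs_le_of_holderWith hu hu0 hy.le

lemma exists_abs_heatSemigroup_quarter_sub_self_le (hlam : 1 ≤ lam) (hα0 : 0 < α) (hα1 : α ≤ 1) :
    ∃ C : ℝ, 0 < C ∧ ∀ {N : ℝ≥0} {u : ℝ → ℝ}, HolderWith N α u → u 0 = 0 → ∀ {x : ℝ}, 0 < x →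
      |heatSemigroup lam u (1 / 4) x - u x| ≤ C * N := by
  obtain ⟨C, hC, hbdd⟩ := exists_abs_heatSemigroup_quarter_le hlam
  obtain ⟨C', hC', hgrowth⟩ := exists_abs_heatSemigroup_quarter_le_rpow hlam α.coe_nonneg
    (mod_cast hα1)
  have hlam0 : 0 ≤ lam := zero_le_one.trans hlam
  refine ⟨max (C * ((1 + lam) * exp (lam ^ 2 / 2))) (C' + 1), by positivity,
    fun {N u} hu hu0 x hx => ?_⟩
  rcases le_total x 1 with hx1 | hx1
  · calc |heatSemigroup lam u (1 / 4) x - u x|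
        ≤ C' * N * x ^ (α : ℝ) + N * x ^ (α : ℝ) := (abs_sub _ _).trans (add_le_add
          (hgrowth hx fun y hy => abs_le_of_holderWith hu hu0 hy.le)
          (abs_le_of_holderWith hu hu0 hx.le))
      _ = (C' + 1) * N * x ^ (α : ℝ) := by ring
      _ ≤ (C' + 1) * N := mul_le_of_le_one_right (by positivity)
          (rpow_le_one hx.le hx1 α.coe_nonneg)
      _ ≤ _ := by gcongr; exact le_max_right _ _
  · -- Subtracting the multiple of the invariant function `y ^ lam` which equals `u x` at `y = x`.
    have heq : heatSemigroup lam (fun y => u y - u x / x ^ lam * y ^ lam) (1 / 4) x =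
        heatSemigroup lam u (1 / 4) x - u x := by
      have hint := (integrableOn_besselHeatKernel_quarter_mul_rpow hlam0 hx).const_mul
        (u x / x ^ lam)
      simp only [mul_left_comm (u x / x ^ lam)] at hint
      rw [heatSemigroup_sub (integrableOn_besselHeatKernel_quarter_mul_of_holderWith hlam hα0 hα1
        hu hu0 hx) hint, heatSemigroup_const_mul, heatSemigroup_quarter_rpow hlam0 hx,
        div_mul_cancel₀ _ (rpow_pos_of_pos hx _).ne']
    calc |heatSemigroup lam u (1 / 4) x - u x|
        ≤ C * ((1 + lam) * N * exp (lam ^ 2 / 2)) := heq ▸ hbdd hx fun y hy => by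
          rw [div_mul_comm, ← div_rpow hy.le hx.le, mul_comm, mul_assoc (_ * _), ← sq_abs (x - y)]
          refine (abs_sub_mul_rpow_le_of_holderWith hu hu0 hα1 hlam hx1 hy).trans ?_
          gcongr
          exact one_add_rpow_le_exp (abs_nonneg _) hlam0
      _ = C * ((1 + lam) * exp (lam ^ 2 / 2)) * N := by ring
      _ ≤ _ := by gcongr; exact le_max_left _ _

end holder

/-- The Steklov mean of `u` over `[y, y + d]`, a differentiable approximation of `u`. -/
def steklovMean (d : ℝ) (u : ℝ → ℝ) (y : ℝ) : ℝ := d⁻¹ * ∫ t in y..y + d, u t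

lemma hasDerivAt_steklovMean {u : ℝ → ℝ} (hu : Continuous u) (d y : ℝ) :
    HasDerivAt (steklovMean d u) (d⁻¹ * (u (y + d) - u y)) y := by
  have hprim : ∀ y, HasDerivAt (fun y => ∫ t in (0 : ℝ)..y, u t) (u y) y := fun y =>
    (hu.integral_hasStrictDerivAt 0 y).hasDerivAt
  refine ((((hprim (y + d)).comp_add_const y d).sub (hprim y)).const_mul d⁻¹).congr_of_eventuallyEq
    (Eventually.of_forall fun y => ?_)
  simp only [steklovMean, Pi.sub_apply]
  rw [intervalIntegral.integral_interval_sub_left (hu.intervalIntegrable _ _)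
    (hu.intervalIntegrable _ _)]

section holder

variable {lam d : ℝ} {N α : ℝ≥0} {u : ℝ → ℝ}

lemma abs_steklovMean_sub_le (hα0 : 0 < α) (hu : HolderWith N α u) (hd : 0 < d) (y : ℝ) :
    |steklovMean d u y - u y| ≤ N * d ^ (α : ℝ) := by
  have heq : steklovMean d u y - u y = d⁻¹ * ∫ t in y..y + d, (u t - u y) := by
    rw [steklovMean, intervalIntegral.integral_sub ((hu.continuous hα0).intervalIntegrable _ _)
      intervalIntegrable_const, intervalIntegral.integral_const, smul_eq_mul, add_sub_cancel_left,
      mul_sub, inv_mul_cancel_left₀ hd.ne']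
  have hint : ‖∫ t in y..y + d, (u t - u y)‖ ≤ N * d ^ (α : ℝ) * |y + d - y| := by
    refine intervalIntegral.norm_integral_le_of_norm_le_const fun t ht => ?_
    rw [uIoc_of_le (by linarith)] at ht
    refine (abs_sub_le_of_holderWith hu t y).trans ?_
    gcongr
    rw [abs_of_pos (sub_pos.2 ht.1)]
    linarith [ht.2]
  rw [add_sub_cancel_left, abs_of_pos hd, norm_eq_abs] at hint
  rwa [heq, abs_mul, abs_of_pos (inv_pos.2 hd), inv_mul_le_iff₀ hd, mul_comm d]

lemma exists_differentiable_abs_sub_le_of_holderWith (hα0 : 0 < α) (hu : HolderWith N α u)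
    (hu0 : u 0 = 0) (hd : 0 < d) :
    ∃ g : ℝ → ℝ, Differentiable ℝ g ∧ g 0 = 0 ∧ (∀ y, |deriv g y| ≤ N * d ^ (α - 1 : ℝ)) ∧
      ∀ y, |u y - g y| ≤ 2 * N * d ^ (α : ℝ) := by
  have hderiv : ∀ y, HasDerivAt (fun y => steklovMean d u y - steklovMean d u 0)
      (d⁻¹ * (u (y + d) - u y)) y := fun y =>
    (hasDerivAt_steklovMean (hu.continuous hα0) d y).sub_const _
  refine ⟨_, fun y => (hderiv y).differentiableAt, sub_self _, fun y => ?_, fun y => ?_⟩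
  · rw [(hderiv y).deriv, abs_mul, abs_of_pos (inv_pos.2 hd), inv_mul_le_iff₀ hd,
      rpow_sub_one hd.ne', mul_left_comm, mul_div_cancel₀ _ hd.ne']
    simpa [abs_of_pos hd] using abs_sub_le_of_holderWith hu (y + d) y
  · calc |u y - (steklovMean d u y - steklovMean d u 0)|
        = |(steklovMean d u 0 - u 0) - (steklovMean d u y - u y)| := by rw [hu0]; ring_nf
      _ ≤ |steklovMean d u 0 - u 0| + |steklovMean d u y - u y| := abs_sub _ _
      _ ≤ 2 * N * d ^ (α : ℝ) := by
        linarith [abs_steklovMean_sub_le hα0 hu hd 0, abs_steklovMean_sub_le hα0 hu hd y]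

lemma exists_abs_heatSemigroup_quarter_sub_le (hlam : 1 ≤ lam) (hα0 : 0 < α) (hα1 : α ≤ 1) :
    ∃ C : ℝ, 0 < C ∧ ∀ {N : ℝ≥0} {u : ℝ → ℝ}, HolderWith N α u → u 0 = 0 →
      ∀ {x₁ x₂ : ℝ}, 0 < x₁ → 0 < x₂ →
      |heatSemigroup lam u (1 / 4) x₁ - heatSemigroup lam u (1 / 4) x₂| ≤
        C * N * |x₁ - x₂| ^ (α : ℝ) := by
  obtain ⟨C, hC, hlip⟩ := exists_abs_heatSemigroup_quarter_sub_le_of_abs_deriv_le hlam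
  obtain ⟨C', hC', hbdd⟩ := exists_abs_heatSemigroup_quarter_le hlam
  refine ⟨C + 4 * C', by positivity, fun {N u} hu hu0 x₁ x₂ hx₁ hx₂ => ?_⟩
  rcases eq_or_ne x₁ x₂ with rfl | hne
  · simp [hα0.ne']
  have hd : 0 < |x₁ - x₂| := abs_pos.2 (sub_ne_zero.2 hne)
  set d := |x₁ - x₂|
  obtain ⟨g, hg, hg0, hg', hug⟩ := exists_differentiable_abs_sub_le_of_holderWith hα0 hu hu0 hd
  have hrem : ∀ x, 0 < x →
      |heatSemigroup lam u (1 / 4) x - heatSemigroup lam g (1 / 4) x| ≤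
        C' * (2 * N * d ^ (α : ℝ)) := fun x hx => by
    have hint := integrableOn_besselHeatKernel_quarter_mul_of_abs_le_rpow hlam zero_le_one le_rfl hx
      hg.continuous.aestronglyMeasurable fun y hy => by
        rw [rpow_one]
        exact abs_le_mul_of_abs_deriv_le hg hg0 hg' hy.le
    rw [← heatSemigroup_sub
      (integrableOn_besselHeatKernel_quarter_mul_of_holderWith hlam hα0 hα1 hu hu0 hx) hint]
    exact hbdd hx fun y _ => (hug y).trans (le_mul_exp_sq_div_two (by positivity) _)
  have hsmooth := hlip hg hg0 hg' hx₁ hx₂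
  have hpow : C * (N * d ^ (α - 1 : ℝ)) * d = C * N * d ^ (α : ℝ) := by
    rw [rpow_sub_one hd.ne']
    field_simp
  calc |heatSemigroup lam u (1 / 4) x₁ - heatSemigroup lam u (1 / 4) x₂|
      = |(heatSemigroup lam u (1 / 4) x₁ - heatSemigroup lam g (1 / 4) x₁) +
          (heatSemigroup lam g (1 / 4) x₁ - heatSemigroup lam g (1 / 4) x₂) -
          (heatSemigroup lam u (1 / 4) x₂ - heatSemigroup lam g (1 / 4) x₂)| := by ring_nf
    _ ≤ C' * (2 * N * d ^ (α : ℝ)) + C * N * d ^ (α : ℝ) + C' * (2 * N * d ^ (α : ℝ)) :=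
        (abs_sub _ _).trans (add_le_add ((abs_add_le _ _).trans
          (add_le_add (hrem x₁ hx₁) (hsmooth.trans_eq hpow))) (hrem x₂ hx₂))
    _ = (C + 4 * C') * N * d ^ (α : ℝ) := by ring

end holder

/-! ### Scaling -/

lemma besselHeatKernel_sq_mul (lam t x y : ℝ) {h : ℝ} (hh : 0 < h) :
    besselHeatKernel lam (h ^ 2 * t) x y = h⁻¹ * besselHeatKernel lam t (x / h) (y / h) := by
  have hsqrt : √(x / h * (y / h)) = √(x * y) / h := by
    rw [div_mul_div_comm, sqrt_div' _ (by positivity), sqrt_mul_self hh.le]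
  have harg : x / h * (y / h) / (2 * t) = x * y / (2 * (h ^ 2 * t)) := by field_simp
  have hexp : -((x / h) ^ 2 + (y / h) ^ 2) / (4 * t) = -(x ^ 2 + y ^ 2) / (4 * (h ^ 2 * t)) := by
    field_simp
  rw [besselHeatKernel, besselHeatKernel, hsqrt, harg, hexp]
  ring

lemma eq_sq_two_mul_sqrt_mul_quarter {s : ℝ} (hs : 0 ≤ s) : s = (2 * √s) ^ 2 * (1 / 4) := by
  rw [mul_pow, sq_sqrt hs]
  ring

section scaling

variable {lam s x : ℝ}

lemma heatSemigroup_eq_quarter (hs : 0 < s) (f : ℝ → ℝ) (x : ℝ) :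
    heatSemigroup lam f s x =
      heatSemigroup lam (fun y => f (2 * √s * y)) (1 / 4) (x / (2 * √s)) := by
  have hh : 0 < 2 * √s := by positivity
  have hsubst := integral_comp_mul_left_Ioi
    (fun y => besselHeatKernel lam (1 / 4) (x / (2 * √s)) (y / (2 * √s)) * f y) 0 hh
  simp only [mul_div_cancel_left₀ _ hh.ne', mul_zero] at hsubst
  conv_lhs => rw [eq_sq_two_mul_sqrt_mul_quarter hs.le]
  simp only [heatSemigroup, besselHeatKernel_sq_mul _ _ _ _ hh, hsubst, smul_eq_mul,
    mul_assoc (2 * √s)⁻¹, integral_const_mul]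

lemma integrableOn_besselHeatKernel_mul_iff (hs : 0 < s) (f : ℝ → ℝ) (x : ℝ) :
    IntegrableOn (fun y => besselHeatKernel lam s x y * f y) (Ioi 0) ↔
      IntegrableOn (fun y => besselHeatKernel lam (1 / 4) (x / (2 * √s)) y * f (2 * √s * y))
        (Ioi 0) := by
  have hh : 0 < 2 * √s := by positivity
  have hsubst := integrableOn_Ioi_comp_mul_left_iff
    (fun y => besselHeatKernel lam (1 / 4) (x / (2 * √s)) (y / (2 * √s)) * f y) 0 hh
  simp only [mul_div_cancel_left₀ _ hh.ne', mul_zero] at hsubst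
  conv_lhs => rw [eq_sq_two_mul_sqrt_mul_quarter hs.le]
  simp only [besselHeatKernel_sq_mul _ _ _ _ hh, mul_assoc (2 * √s)⁻¹]
  rw [hsubst]
  exact integrable_const_mul_iff (isUnit_iff_ne_zero.2 (inv_pos.2 hh).ne') _

lemma integrableOn_besselHeatKernel_mul_of_abs_le_rpow {N α : ℝ} {f : ℝ → ℝ} (hlam : 1 ≤ lam)
    (hα0 : 0 ≤ α) (hα1 : α ≤ 1) (hm : Measurable f) (hf : ∀ y, 0 < y → |f y| ≤ N * y ^ α)
    (hs : 0 < s) (hx : 0 < x) :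
    IntegrableOn (fun y => besselHeatKernel lam s x y * f y) (Ioi 0) := by
  have hh : 0 < 2 * √s := by positivity
  refine (integrableOn_besselHeatKernel_mul_iff hs f x).2
    (integrableOn_besselHeatKernel_quarter_mul_of_abs_le_rpow (N := N * (2 * √s) ^ α) hlam hα0 hα1
      (div_pos hx hh) (hm.comp (measurable_const_mul _)).aestronglyMeasurable fun y hy => ?_)
  rw [mul_assoc N, ← mul_rpow hh.le hy.le]
  exact hf _ (mul_pos hh hy)

lemma exists_abs_heatSemigroup_le_rpow {α : ℝ} (hlam : 1 ≤ lam) (hα0 : 0 ≤ α) (hα1 : α ≤ 1) :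
    ∃ C : ℝ, 0 < C ∧ ∀ {N s x : ℝ} {f : ℝ → ℝ}, 0 < s → 0 < x →
      (∀ y, 0 < y → |f y| ≤ N * y ^ α) → |heatSemigroup lam f s x| ≤ C * N * x ^ α := by
  obtain ⟨C, hC, hquarter⟩ := exists_abs_heatSemigroup_quarter_le_rpow hlam hα0 hα1
  refine ⟨C, hC, fun {N s x f} hs hx hf => ?_⟩
  have hh : 0 < 2 * √s := by positivity
  rw [heatSemigroup_eq_quarter hs]
  calc |heatSemigroup lam (fun y => f (2 * √s * y)) (1 / 4) (x / (2 * √s))|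
      ≤ C * (N * (2 * √s) ^ α) * (x / (2 * √s)) ^ α :=
        hquarter (div_pos hx hh) fun y hy => (hf _ (mul_pos hh hy)).trans_eq <| by
          rw [mul_rpow hh.le hy.le, mul_assoc]
    _ = C * N * x ^ α := by rw [div_rpow hx.le hh.le]; field_simp

variable {N α : ℝ≥0} {u : ℝ → ℝ}

lemma holderWith_comp_mul_left (hu : HolderWith N α u) {h : ℝ} (hh : 0 ≤ h) :
    HolderWith (N * h.toNNReal ^ (α : ℝ)) α fun y => u (h * y) := by
  have hmul : HolderWith h.toNNReal 1 fun y : ℝ => h * y :=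
    holderWith_one.2 (LipschitzWith.of_dist_le_mul fun x y => by
      rw [Real.dist_eq, Real.dist_eq, ← mul_sub, abs_mul, abs_of_nonneg hh, coe_toNNReal h hh])
  simpa only [mul_one, Function.comp_def] using hu.comp hmul

lemma exists_abs_heatSemigroup_sub_self_le (hlam : 1 ≤ lam) (hα0 : 0 < α) (hα1 : α ≤ 1) :
    ∃ C : ℝ, 0 < C ∧ ∀ {N : ℝ≥0} {u : ℝ → ℝ}, HolderWith N α u → u 0 = 0 →
      ∀ {s x : ℝ}, 0 < s → 0 < x →
      |heatSemigroup lam u s x - u x| ≤ C * N * (2 * √s) ^ (α : ℝ) := by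
  obtain ⟨C, hC, hquarter⟩ := exists_abs_heatSemigroup_quarter_sub_self_le hlam hα0 hα1
  refine ⟨C, hC, fun {N u} hu hu0 s x hs hx => ?_⟩
  have hh : 0 < 2 * √s := by positivity
  have hscaled := hquarter (holderWith_comp_mul_left hu hh.le) (by simpa) (div_pos hx hh)
  rwa [mul_div_cancel₀ x hh.ne', NNReal.coe_mul, NNReal.coe_rpow, coe_toNNReal _ hh.le,
    ← heatSemigroup_eq_quarter hs, ← mul_assoc] at hscaled

lemma exists_abs_heatSemigroup_sub_le (hlam : 1 ≤ lam) (hα0 : 0 < α) (hα1 : α ≤ 1) :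
    ∃ C : ℝ, 0 < C ∧ ∀ {N : ℝ≥0} {u : ℝ → ℝ}, HolderWith N α u → u 0 = 0 →
      ∀ {s x₁ x₂ : ℝ}, 0 < s → 0 < x₁ → 0 < x₂ →
      |heatSemigroup lam u s x₁ - heatSemigroup lam u s x₂| ≤ C * N * |x₁ - x₂| ^ (α : ℝ) := by
  obtain ⟨C, hC, hquarter⟩ := exists_abs_heatSemigroup_quarter_sub_le hlam hα0 hα1
  refine ⟨C, hC, fun {N u} hu hu0 s x₁ x₂ hs hx₁ hx₂ => ?_⟩
  have hh : 0 < 2 * √s := by positivity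
  rw [heatSemigroup_eq_quarter hs, heatSemigroup_eq_quarter hs]
  refine (hquarter (holderWith_comp_mul_left hu hh.le) (by simpa) (div_pos hx₁ hh)
    (div_pos hx₂ hh)).trans_eq ?_
  rw [← sub_div, abs_div, abs_of_pos hh, NNReal.coe_mul, NNReal.coe_rpow, coe_toNNReal _ hh.le,
    div_rpow (abs_nonneg _) hh.le]
  field_simp

end scaling

/-! ### Subordination -/

/-- The density on `(0, ∞)` of the one-half stable law at time `t`, through which the Poisson
semigroup is subordinated to the heat semigroup. -/
def stableDensity (t s : ℝ) : ℝ :=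
  t / (2 * √π) * (s ^ (-(3 : ℝ) / 2) * exp (-t ^ 2 / (4 * s)))

lemma stableDensity_nonneg {t s : ℝ} (ht : 0 ≤ t) (hs : 0 ≤ s) : 0 ≤ stableDensity t s := by
  unfold stableDensity
  positivity

lemma measurable_stableDensity : Measurable fun p : ℝ × ℝ => stableDensity p.1 p.2 := by
  unfold stableDensity
  fun_prop

lemma stableDensity_mul_rpow_eq (α t : ℝ) {s : ℝ} (hs : 0 < s) :
    stableDensity t s * (2 * √s) ^ α = t / (2 * √π) * 2 ^ α * ((|(-1)| * s ^ ((-1 : ℝ) - 1)) •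
      ((s ^ (-1 : ℝ)) ^ ((1 - α) / 2 - 1) * exp (-(t ^ 2 / 4 * s ^ (-1 : ℝ))))) := by
  have hpow : s ^ (-1 - 1 : ℝ) * (s ^ (-1 : ℝ)) ^ ((1 - α) / 2 - 1) =
      s ^ (-(3 : ℝ) / 2) * √s ^ α := by
    rw [sqrt_eq_rpow, ← rpow_mul hs.le, ← rpow_mul hs.le, ← rpow_add hs, ← rpow_add hs]
    ring_nf
  have hexp : -(t ^ 2 / 4 * s ^ (-1 : ℝ)) = -t ^ 2 / (4 * s) := by
    rw [rpow_neg_one]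
    field_simp
  rw [stableDensity, hexp, smul_eq_mul, abs_neg, abs_one, one_mul,
    mul_rpow zero_le_two (sqrt_nonneg s)]
  linear_combination -(t / (2 * √π) * 2 ^ α * exp (-t ^ 2 / (4 * s))) * hpow

section moments

variable {α t : ℝ}

lemma integrableOn_stableDensity_mul_rpow (hα : α < 1) (ht : 0 < t) :
    IntegrableOn (fun s => stableDensity t s * (2 * √s) ^ α) (Ioi 0) := by
  have hgamma : IntegrableOn (fun w => w ^ ((1 - α) / 2 - 1) * exp (-(t ^ 2 / 4 * w))) (Ioi 0) := by
    simpa using integrableOn_rpow_mul_exp_neg_mul_rpow (p := 1) (s := (1 - α) / 2 - 1)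
      (b := t ^ 2 / 4) (by linarith) one_pos (by positivity)
  exact IntegrableOn.congr_fun
    (((integrableOn_Ioi_comp_rpow_iff _ (neg_ne_zero.2 one_ne_zero)).2 hgamma).const_mul _)
    (fun s hs => (stableDensity_mul_rpow_eq α t hs).symm) measurableSet_Ioi

lemma integral_stableDensity_mul_rpow (hα : α < 1) (ht : 0 < t) :
    ∫ s in Ioi (0 : ℝ), stableDensity t s * (2 * √s) ^ α =
      Gamma ((1 - α) / 2) / √π * t ^ α := by
  have hbase : (1 / (t ^ 2 / 4)) ^ ((1 - α) / 2) = 2 / t * (t ^ α / 2 ^ α) := by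
    rw [show 1 / (t ^ 2 / 4) = (2 / t) ^ (2 : ℝ) by rw [rpow_two]; field_simp; norm_num,
      ← rpow_mul (by positivity), mul_div_cancel₀ _ two_ne_zero, rpow_sub (by positivity), rpow_one,
      div_rpow zero_le_two ht.le, div_div_eq_mul_div, mul_div_assoc]
  rw [setIntegral_congr_fun measurableSet_Ioi fun s hs => stableDensity_mul_rpow_eq α t hs,
    integral_const_mul, integral_comp_rpow_Ioi (fun w => w ^ ((1 - α) / 2 - 1) *
      exp (-(t ^ 2 / 4 * w))) (neg_ne_zero.2 one_ne_zero),
    integral_rpow_mul_exp_neg_mul_Ioi (by linarith) (by positivity), hbase]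
  field_simp

lemma integrableOn_stableDensity (ht : 0 < t) : IntegrableOn (stableDensity t) (Ioi 0) := by
  simpa using integrableOn_stableDensity_mul_rpow zero_lt_one ht

lemma integral_stableDensity (ht : 0 < t) : ∫ s in Ioi (0 : ℝ), stableDensity t s = 1 := by
  simpa [← one_div, Gamma_one_half_eq, (sqrt_pos.2 pi_pos).ne'] using
    integral_stableDensity_mul_rpow zero_lt_one ht

end moments

lemma abs_integral_stableDensity_mul_le {t : ℝ} {f b : ℝ → ℝ} (ht : 0 ≤ t)
    (hb : IntegrableOn (fun s => stableDensity t s * b s) (Ioi 0))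
    (hf : ∀ s, 0 < s → |f s| ≤ b s) :
    |∫ s in Ioi (0 : ℝ), stableDensity t s * f s| ≤
      ∫ s in Ioi (0 : ℝ), stableDensity t s * b s := by
  rw [← norm_eq_abs]
  refine norm_integral_le_of_norm_le hb ?_
  filter_upwards [ae_restrict_mem measurableSet_Ioi] with s hs
  rw [norm_mul, norm_eq_abs, norm_eq_abs, abs_of_nonneg (stableDensity_nonneg ht (le_of_lt hs))]
  exact mul_le_mul_of_nonneg_left (hf s hs) (stableDensity_nonneg ht (le_of_lt hs))

lemma abs_integral_stableDensity_mul_le_const {t B : ℝ} {f : ℝ → ℝ} (ht : 0 < t)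
    (hf : ∀ s, 0 < s → |f s| ≤ B) : |∫ s in Ioi (0 : ℝ), stableDensity t s * f s| ≤ B := by
  simpa [integral_mul_const, integral_stableDensity ht] using
    abs_integral_stableDensity_mul_le ht.le ((integrableOn_stableDensity ht).mul_const B) hf

lemma besselPoissonKernel_eq_integral_stableDensity_mul (lam t x y : ℝ) :
    besselPoissonKernel lam t x y =
      ∫ s in Ioi (0 : ℝ), stableDensity t s * besselHeatKernel lam s x y := by
  simp only [besselPoissonKernel, stableDensity, mul_assoc, integral_const_mul]

lemma measurable_poissonSemigroup {f : ℝ → ℝ} (hf : Measurable f) (lam x : ℝ) :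
    Measurable fun t => poissonSemigroup lam f t x := by
  have hkernel : StronglyMeasurable fun p : ℝ × ℝ => besselPoissonKernel lam p.1 x p.2 := by
    simp only [besselPoissonKernel_eq_integral_stableDensity_mul]
    refine StronglyMeasurable.integral_prod_right (f := fun (p : ℝ × ℝ) s =>
      stableDensity p.1 s * besselHeatKernel lam s x p.2) (Measurable.stronglyMeasurable ?_)
    exact (measurable_stableDensity.comp ((measurable_fst.comp measurable_fst).prodMk
      measurable_snd)).mul ((measurable_besselHeatKernel lam x).comp
        (measurable_snd.prodMk (measurable_snd.comp measurable_fst)))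
  exact (StronglyMeasurable.integral_prod_right
    (f := fun t y => besselPoissonKernel lam t x y * f y)
    (hkernel.measurable.mul (hf.comp measurable_snd)).stronglyMeasurable).measurable

section subordination

variable {lam α N t x : ℝ} {f : ℝ → ℝ}

lemma integrable_stableDensity_mul_besselHeatKernel_mul (hlam : 1 ≤ lam) (hα0 : 0 ≤ α) (hα1 : α ≤ 1)
    (hm : Measurable f) (hf : ∀ y, 0 < y → |f y| ≤ N * y ^ α) (ht : 0 < t) (hx : 0 < x) :
    Integrable (fun p : ℝ × ℝ => stableDensity t p.1 * (besselHeatKernel lam p.1 x p.2 * f p.2))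
      ((volume.restrict (Ioi 0)).prod (volume.restrict (Ioi 0))) := by
  obtain ⟨C, -, hbound⟩ := exists_abs_heatSemigroup_le_rpow hlam hα0 hα1
  have hmeas : Measurable
      fun p : ℝ × ℝ => stableDensity t p.1 * (besselHeatKernel lam p.1 x p.2 * f p.2) :=
    (measurable_stableDensity.comp (measurable_const.prodMk measurable_fst)).mul
      ((measurable_besselHeatKernel lam x).mul (hm.comp measurable_snd))
  rw [integrable_prod_iff hmeas.aestronglyMeasurable]
  constructor
  · filter_upwards [ae_restrict_mem measurableSet_Ioi] with s hs
    exact (integrableOn_besselHeatKernel_mul_of_abs_le_rpow hlam hα0 hα1 hm hf hs hx).const_mul _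
  · refine Integrable.mono' ((integrableOn_stableDensity ht).mul_const (C * N * x ^ α))
      hmeas.norm.stronglyMeasurable.integral_prod_right'.aestronglyMeasurable ?_
    filter_upwards [ae_restrict_mem measurableSet_Ioi] with s hs
    have hρ := stableDensity_nonneg ht.le (le_of_lt hs)
    have hinner : ∫ y in Ioi (0 : ℝ), ‖stableDensity t s * (besselHeatKernel lam s x y * f y)‖ =
        stableDensity t s * heatSemigroup lam (fun y => |f y|) s x := by
      rw [heatSemigroup, ← integral_const_mul]
      refine setIntegral_congr_fun measurableSet_Ioi fun y hy => ?_
      simp only [norm_mul, norm_eq_abs, abs_of_nonneg hρ,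
        abs_of_nonneg (besselHeatKernel_nonneg (zero_le_one.trans hlam) hs hx hy)]
    rw [hinner, norm_mul, norm_eq_abs, norm_eq_abs, abs_of_nonneg hρ]
    exact mul_le_mul_of_nonneg_left
      (hbound hs hx fun y hy => (abs_abs (f y)).trans_le (hf y hy)) hρ

lemma integrableOn_besselPoissonKernel_mul (hlam : 1 ≤ lam) (hα0 : 0 ≤ α) (hα1 : α ≤ 1)
    (hm : Measurable f) (hf : ∀ y, 0 < y → |f y| ≤ N * y ^ α) (ht : 0 < t) (hx : 0 < x) :
    IntegrableOn (fun y => besselPoissonKernel lam t x y * f y) (Ioi 0) := by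
  have hint := (integrable_stableDensity_mul_besselHeatKernel_mul hlam hα0 hα1 hm hf ht
    hx).integral_prod_right
  simpa only [IntegrableOn, besselPoissonKernel_eq_integral_stableDensity_mul, ← mul_assoc,
    integral_mul_const] using hint

lemma integrableOn_stableDensity_mul_heatSemigroup (hlam : 1 ≤ lam) (hα0 : 0 ≤ α) (hα1 : α ≤ 1)
    (hm : Measurable f) (hf : ∀ y, 0 < y → |f y| ≤ N * y ^ α) (ht : 0 < t) (hx : 0 < x) :
    IntegrableOn (fun s => stableDensity t s * heatSemigroup lam f s x) (Ioi 0) := by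
  have hint := (integrable_stableDensity_mul_besselHeatKernel_mul hlam hα0 hα1 hm hf ht
    hx).integral_prod_left
  simpa only [IntegrableOn, heatSemigroup, integral_const_mul] using hint

lemma poissonSemigroup_eq_integral_stableDensity_mul (hlam : 1 ≤ lam) (hα0 : 0 ≤ α) (hα1 : α ≤ 1)
    (hm : Measurable f) (hf : ∀ y, 0 < y → |f y| ≤ N * y ^ α) (ht : 0 < t) (hx : 0 < x) :
    poissonSemigroup lam f t x =
      ∫ s in Ioi (0 : ℝ), stableDensity t s * heatSemigroup lam f s x := by
  have hswap := integral_integral_swap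
    (f := fun s y => stableDensity t s * (besselHeatKernel lam s x y * f y))
    (integrable_stableDensity_mul_besselHeatKernel_mul hlam hα0 hα1 hm hf ht hx)
  simp only [poissonSemigroup, besselPoissonKernel_eq_integral_stableDensity_mul, heatSemigroup,
    ← integral_const_mul, ← integral_mul_const, hswap, mul_assoc]

end subordination

section holder

variable {lam : ℝ} {α : ℝ≥0}

lemma exists_abs_poissonSemigroup_sub_self_le_rpow (hlam : 1 ≤ lam) (hα0 : 0 < α) (hα1 : α ≤ 1) :
    ∃ C : ℝ, 0 < C ∧ ∀ {N : ℝ≥0} {u : ℝ → ℝ}, HolderWith N α u → u 0 = 0 →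
      ∀ {t x : ℝ}, 0 < t → 0 < x →
      |poissonSemigroup lam u t x - u x| ≤ C * N * x ^ (α : ℝ) := by
  have hα1' : (α : ℝ) ≤ 1 := mod_cast hα1
  obtain ⟨C, hC, hheat⟩ := exists_abs_heatSemigroup_le_rpow hlam α.coe_nonneg hα1'
  refine ⟨C + 1, by positivity, fun {N u} hu hu0 t x ht hx => ?_⟩
  have hgrowth : ∀ y, 0 < y → |u y| ≤ N * y ^ (α : ℝ) := fun y hy =>
    abs_le_of_holderWith hu hu0 hy.le
  calc |poissonSemigroup lam u t x - u x| ≤ |poissonSemigroup lam u t x| + |u x| := abs_sub _ _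
    _ ≤ C * N * x ^ (α : ℝ) + N * x ^ (α : ℝ) := by
        refine add_le_add ?_ (hgrowth x hx)
        rw [poissonSemigroup_eq_integral_stableDensity_mul hlam α.coe_nonneg hα1'
          (hu.continuous hα0).measurable hgrowth ht hx]
        exact abs_integral_stableDensity_mul_le_const ht fun s hs => hheat hs hx hgrowth
    _ = (C + 1) * N * x ^ (α : ℝ) := by ring

lemma exists_abs_poissonSemigroup_sub_self_le_rpow_time (hlam : 1 ≤ lam) (hα0 : 0 < α)
    (hα1 : α < 1) :
    ∃ C : ℝ, 0 < C ∧ ∀ {N : ℝ≥0} {u : ℝ → ℝ}, HolderWith N α u → u 0 = 0 →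
      ∀ {t x : ℝ}, 0 < t → 0 < x →
      |poissonSemigroup lam u t x - u x| ≤ C * N * t ^ (α : ℝ) := by
  have hα1' : (α : ℝ) < 1 := mod_cast hα1
  obtain ⟨C, hC, hheat⟩ := exists_abs_heatSemigroup_sub_self_le hlam hα0 hα1.le
  have : 0 < Gamma ((1 - α) / 2) := Gamma_pos_of_pos (by linarith)
  refine ⟨C * (Gamma ((1 - α) / 2) / √π), by positivity, fun {N u} hu hu0 t x ht hx => ?_⟩
  have hgrowth : ∀ y, 0 < y → |u y| ≤ N * y ^ (α : ℝ) := fun y hy =>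
    abs_le_of_holderWith hu hu0 hy.le
  have heq : poissonSemigroup lam u t x - u x =
      ∫ s in Ioi (0 : ℝ), stableDensity t s * (heatSemigroup lam u s x - u x) := by
    simp only [mul_sub]
    rw [integral_sub (integrableOn_stableDensity_mul_heatSemigroup hlam α.coe_nonneg hα1'.le
        (hu.continuous hα0).measurable hgrowth ht hx) ((integrableOn_stableDensity ht).mul_const _),
      integral_mul_const, integral_stableDensity ht, one_mul,
      poissonSemigroup_eq_integral_stableDensity_mul hlam α.coe_nonneg hα1'.le
        (hu.continuous hα0).measurable hgrowth ht hx]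
  have hint := (integrableOn_stableDensity_mul_rpow hα1' ht).const_mul (C * N)
  simp only [mul_left_comm (C * (N : ℝ))] at hint
  calc |poissonSemigroup lam u t x - u x|
      ≤ ∫ s in Ioi (0 : ℝ), stableDensity t s * (C * N * (2 * √s) ^ (α : ℝ)) :=
        heq ▸ abs_integral_stableDensity_mul_le ht.le hint fun s hs => hheat hu hu0 hs hx
    _ = C * (Gamma ((1 - α) / 2) / √π) * N * t ^ (α : ℝ) := by
        simp only [mul_left_comm _ (C * (N : ℝ))]
        rw [integral_const_mul, integral_stableDensity_mul_rpow hα1' ht]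
        ring

lemma exists_abs_poissonSemigroup_sub_self_sub_le (hlam : 1 ≤ lam) (hα0 : 0 < α) (hα1 : α ≤ 1) :
    ∃ C : ℝ, 0 < C ∧ ∀ {N : ℝ≥0} {u : ℝ → ℝ}, HolderWith N α u → u 0 = 0 →
      ∀ {t x₁ x₂ : ℝ}, 0 < t → 0 < x₁ → 0 < x₂ →
      |(poissonSemigroup lam u t x₁ - u x₁) - (poissonSemigroup lam u t x₂ - u x₂)| ≤
        C * N * |x₁ - x₂| ^ (α : ℝ) := by
  have hα1' : (α : ℝ) ≤ 1 := mod_cast hα1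
  obtain ⟨C, hC, hheat⟩ := exists_abs_heatSemigroup_sub_le hlam hα0 hα1
  refine ⟨C + 1, by positivity, fun {N u} hu hu0 t x₁ x₂ ht hx₁ hx₂ => ?_⟩
  have hm := (hu.continuous hα0).measurable
  have hgrowth : ∀ y, 0 < y → |u y| ≤ N * y ^ (α : ℝ) := fun y hy =>
    abs_le_of_holderWith hu hu0 hy.le
  have heq : poissonSemigroup lam u t x₁ - poissonSemigroup lam u t x₂ = ∫ s in Ioi (0 : ℝ),
      stableDensity t s * (heatSemigroup lam u s x₁ - heatSemigroup lam u s x₂) := by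
    simp only [mul_sub]
    rw [integral_sub
      (integrableOn_stableDensity_mul_heatSemigroup hlam α.coe_nonneg hα1' hm hgrowth ht hx₁)
      (integrableOn_stableDensity_mul_heatSemigroup hlam α.coe_nonneg hα1' hm hgrowth ht hx₂),
      poissonSemigroup_eq_integral_stableDensity_mul hlam α.coe_nonneg hα1' hm hgrowth ht hx₁,
      poissonSemigroup_eq_integral_stableDensity_mul hlam α.coe_nonneg hα1' hm hgrowth ht hx₂]
  rw [sub_sub_sub_comm]
  calc |(poissonSemigroup lam u t x₁ - poissonSemigroup lam u t x₂) - (u x₁ - u x₂)|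
      ≤ |poissonSemigroup lam u t x₁ - poissonSemigroup lam u t x₂| + |u x₁ - u x₂| := abs_sub _ _
    _ ≤ C * N * |x₁ - x₂| ^ (α : ℝ) + N * |x₁ - x₂| ^ (α : ℝ) :=
        add_le_add (heq ▸ abs_integral_stableDensity_mul_le_const ht fun s hs =>
          hheat hu hu0 hs hx₁ hx₂) (abs_sub_le_of_holderWith hu x₁ x₂)
    _ = (C + 1) * N * |x₁ - x₂| ^ (α : ℝ) := by ring

end holder

/-! ### Integration in time -/

section timeIntegral

variable {α β A B r : ℝ} {D : ℝ → ℝ}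

lemma abs_mul_rpow_le_of_abs_le {a b t γ : ℝ} (ht : 0 < t) (h : |a| ≤ b) :
    |a * t ^ γ| ≤ b * t ^ γ := by
  rw [abs_mul, abs_of_pos (rpow_pos_of_pos ht _)]
  gcongr

lemma integrableOn_Ioc_rpow_sub_one {γ : ℝ} (hγ : 0 < γ) (hr : 0 ≤ r) :
    IntegrableOn (fun t : ℝ => t ^ (γ - 1)) (Ioc 0 r) :=
  (intervalIntegrable_iff_integrableOn_Ioc_of_le hr).1
    (intervalIntegral.intervalIntegrable_rpow' (by linarith))

lemma integral_Ioc_rpow_sub_one {γ : ℝ} (hγ : 0 < γ) (hr : 0 ≤ r) :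
    ∫ t in Ioc 0 r, t ^ (γ - 1) = r ^ γ / γ := by
  rw [← intervalIntegral.integral_of_le hr, integral_rpow (Or.inl (by linarith)),
    sub_add_cancel, zero_rpow hγ.ne', sub_zero]

lemma integrableOn_Ioc_mul_rpow_and_abs_integral_le (hαβ : 0 < α - β) (hr : 0 ≤ r)
    (hD : AEStronglyMeasurable D (volume.restrict (Ioi 0)))
    (hA : ∀ t, 0 < t → |D t| ≤ A * t ^ α) :
    IntegrableOn (fun t => D t * t ^ (-1 - β)) (Ioc 0 r) ∧
      |∫ t in Ioc 0 r, D t * t ^ (-1 - β)| ≤ A * (r ^ (α - β) / (α - β)) := by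
  have hdom := (integrableOn_Ioc_rpow_sub_one hαβ hr).const_mul A
  have hbound : ∀ᵐ t ∂volume.restrict (Ioc 0 r),
      ‖D t * t ^ (-1 - β)‖ ≤ A * t ^ (α - β - 1) := by
    filter_upwards [ae_restrict_mem measurableSet_Ioc] with t ht
    rw [show α - β - 1 = α + (-1 - β) by ring, rpow_add ht.1, ← mul_assoc]
    exact abs_mul_rpow_le_of_abs_le ht.1 (hA t ht.1)
  refine ⟨Integrable.mono' hdom ((hD.mono_set Ioc_subset_Ioi_self).mul
    (measurable_id.pow_const _).aestronglyMeasurable) hbound, ?_⟩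
  rw [← integral_Ioc_rpow_sub_one hαβ hr, ← integral_const_mul]
  exact norm_integral_le_of_norm_le hdom hbound

lemma integrableOn_Ioi_mul_rpow_and_abs_integral_le (hβ : 0 < β) (hr : 0 < r)
    (hD : AEStronglyMeasurable D (volume.restrict (Ioi 0))) (hB : ∀ t, 0 < t → |D t| ≤ B) :
    IntegrableOn (fun t => D t * t ^ (-1 - β)) (Ioi r) ∧
      |∫ t in Ioi r, D t * t ^ (-1 - β)| ≤ B * (r ^ (-β) / β) := by
  have hdom := (integrableOn_Ioi_rpow_of_lt (a := -1 - β) (by linarith) hr).const_mul B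
  have hvalue : ∫ t in Ioi r, t ^ (-1 - β) = r ^ (-β) / β := by
    rw [integral_Ioi_rpow_of_lt (by linarith) hr, show -1 - β + 1 = -β by ring, neg_div_neg_eq]
  have hbound : ∀ᵐ t ∂volume.restrict (Ioi r), ‖D t * t ^ (-1 - β)‖ ≤ B * t ^ (-1 - β) := by
    filter_upwards [ae_restrict_mem measurableSet_Ioi] with t ht
    exact abs_mul_rpow_le_of_abs_le (hr.trans ht) (hB t (hr.trans ht))
  refine ⟨Integrable.mono' hdom ((hD.mono_set (Ioi_subset_Ioi hr.le)).mul
    (measurable_id.pow_const _).aestronglyMeasurable) hbound, ?_⟩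
  rw [← hvalue, ← integral_const_mul]
  exact norm_integral_le_of_norm_le hdom hbound

lemma integrableOn_mul_rpow (hβ : 0 < β) (hαβ : 0 < α - β)
    (hD : AEStronglyMeasurable D (volume.restrict (Ioi 0)))
    (hA : ∀ t, 0 < t → |D t| ≤ A * t ^ α) (hB : ∀ t, 0 < t → |D t| ≤ B) :
    IntegrableOn (fun t => D t * t ^ (-1 - β)) (Ioi 0) := by
  rw [← Ioc_union_Ioi_eq_Ioi zero_le_one]
  exact (integrableOn_Ioc_mul_rpow_and_abs_integral_le hαβ zero_le_one hD hA).1.union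
    (integrableOn_Ioi_mul_rpow_and_abs_integral_le hβ one_pos hD hB).1

lemma abs_integral_mul_rpow_le (hβ : 0 < β) (hαβ : 0 < α - β) (hr : 0 < r)
    (hD : AEStronglyMeasurable D (volume.restrict (Ioi 0)))
    (hA : ∀ t, 0 < t → |D t| ≤ A * t ^ α) (hB : ∀ t, 0 < t → |D t| ≤ A * r ^ α) :
    |∫ t in Ioi (0 : ℝ), D t * t ^ (-1 - β)| ≤ (1 / (α - β) + 1 / β) * A * r ^ (α - β) := by
  obtain ⟨hint_near, hle_near⟩ := integrableOn_Ioc_mul_rpow_and_abs_integral_le hαβ hr.le hD hA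
  obtain ⟨hint_far, hle_far⟩ := integrableOn_Ioi_mul_rpow_and_abs_integral_le hβ hr hD hB
  rw [← Ioc_union_Ioi_eq_Ioi hr.le,
    setIntegral_union (Ioc_disjoint_Ioi le_rfl) measurableSet_Ioi hint_near hint_far]
  refine (abs_add_le _ _).trans ((add_le_add hle_near hle_far).trans_eq ?_)
  rw [sub_eq_add_neg α β, rpow_add hr]
  ring

end timeIntegral

/-- The positive fractional power `v` of the theorem: the power of order `2σ` of the generator of
the Poisson semigroup. -/
def poissonFracPower (lam σ : ℝ) (u : ℝ → ℝ) (x : ℝ) : ℝ :=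
  1 / gammaNeg (2 * σ) *
    ∫ t in Ioi (0 : ℝ), (poissonSemigroup lam u t x - u x) * t ^ (-1 - 2 * σ)

section holder

variable {lam σ : ℝ} {α : ℝ≥0}

lemma integrableOn_poissonSemigroup_sub_self_mul_rpow {β x : ℝ} {N : ℝ≥0} {u : ℝ → ℝ}
    (hlam : 1 ≤ lam) (hα1 : α < 1) (hβ : 0 < β) (hαβ : 0 < α - β) (hu : HolderWith N α u)
    (hu0 : u 0 = 0) (hx : 0 < x) :
    IntegrableOn (fun t => (poissonSemigroup lam u t x - u x) * t ^ (-1 - β)) (Ioi 0) := by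
  have hα0 : 0 < α := NNReal.coe_pos.1 (by linarith)
  obtain ⟨C, -, htime⟩ := exists_abs_poissonSemigroup_sub_self_le_rpow_time hlam hα0 hα1
  obtain ⟨C', -, hspace⟩ := exists_abs_poissonSemigroup_sub_self_le_rpow hlam hα0 hα1.le
  exact integrableOn_mul_rpow hβ hαβ ((measurable_poissonSemigroup
    (hu.continuous hα0).measurable lam x).sub_const _).aestronglyMeasurable
    (fun t ht => htime hu hu0 ht hx) fun t ht => hspace hu hu0 ht hx

lemma exists_abs_poissonFracPower_le (hlam : 1 ≤ lam) (hσ : 0 < σ) (hα1 : α < 1)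
    (hασ : 0 < α - 2 * σ) :
    ∃ C : ℝ, 0 ≤ C ∧ ∀ {N : ℝ≥0} {u : ℝ → ℝ}, HolderWith N α u → u 0 = 0 → ∀ {x : ℝ}, 0 < x →
      |poissonFracPower lam σ u x| ≤ C * N * x ^ (α - 2 * σ) := by
  have hα0 : 0 < α := NNReal.coe_pos.1 (by linarith)
  obtain ⟨C, hC, htime⟩ := exists_abs_poissonSemigroup_sub_self_le_rpow_time hlam hα0 hα1
  obtain ⟨C', hC', hspace⟩ := exists_abs_poissonSemigroup_sub_self_le_rpow hlam hα0 hα1.le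
  refine ⟨|1 / gammaNeg (2 * σ)| * ((1 / (α - 2 * σ) + 1 / (2 * σ)) * (C + C')),
    by positivity, fun {N u} hu hu0 x hx => ?_⟩
  have hintegral := abs_integral_mul_rpow_le (A := (C + C') * N) (by linarith) hασ hx
    ((measurable_poissonSemigroup
      (hu.continuous hα0).measurable lam x).sub_const (u x)).aestronglyMeasurable
    (fun t ht => (htime hu hu0 ht hx).trans (by gcongr; linarith))
    (fun t ht => (hspace hu hu0 ht hx).trans (by gcongr; linarith))
  rw [poissonFracPower, abs_mul, mul_assoc _ _ (N : ℝ), mul_assoc]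
  gcongr
  simpa only [mul_assoc] using hintegral

lemma exists_abs_poissonFracPower_sub_le (hlam : 1 ≤ lam) (hσ : 0 < σ) (hα1 : α < 1)
    (hασ : 0 < α - 2 * σ) :
    ∃ C : ℝ, 0 ≤ C ∧ ∀ {N : ℝ≥0} {u : ℝ → ℝ}, HolderWith N α u → u 0 = 0 →
      ∀ {x₁ x₂ : ℝ}, 0 < x₁ → 0 < x₂ → x₁ ≠ x₂ →
      |poissonFracPower lam σ u x₁ - poissonFracPower lam σ u x₂| ≤
        C * N * |x₁ - x₂| ^ (α - 2 * σ) := by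
  have hα0 : 0 < α := NNReal.coe_pos.1 (by linarith)
  obtain ⟨C, hC, htime⟩ := exists_abs_poissonSemigroup_sub_self_le_rpow_time hlam hα0 hα1
  obtain ⟨C', hC', hspace⟩ := exists_abs_poissonSemigroup_sub_self_sub_le hlam hα0 hα1.le
  refine ⟨|1 / gammaNeg (2 * σ)| * ((1 / (α - 2 * σ) + 1 / (2 * σ)) * (2 * C + C')),
    by positivity, fun {N u} hu hu0 x₁ x₂ hx₁ hx₂ hne => ?_⟩
  have hmeas : ∀ x, Measurable fun t => poissonSemigroup lam u t x - u x := fun x =>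
    (measurable_poissonSemigroup (hu.continuous hα0).measurable lam x).sub_const (u x)
  have hintegral := abs_integral_mul_rpow_le (A := (2 * C + C') * N) (by linarith) hασ
    (abs_pos.2 (sub_ne_zero.2 hne)) ((hmeas x₁).sub (hmeas x₂)).aestronglyMeasurable
    (fun t ht => calc
      _ ≤ C * N * t ^ (α : ℝ) + C * N * t ^ (α : ℝ) :=
        (abs_sub _ _).trans (add_le_add (htime hu hu0 ht hx₁) (htime hu hu0 ht hx₂))
      _ = 2 * C * N * t ^ (α : ℝ) := by ring
      _ ≤ (2 * C + C') * N * t ^ (α : ℝ) := by gcongr; linarith)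
    (fun t ht => (hspace hu hu0 ht hx₁ hx₂).trans (by gcongr; linarith))
  have hint : ∀ x, 0 < x → IntegrableOn
      (fun t => (poissonSemigroup lam u t x - u x) * t ^ (-1 - 2 * σ)) (Ioi 0) := fun x hx =>
    integrableOn_poissonSemigroup_sub_self_mul_rpow hlam hα1 (by linarith) hασ hu hu0 hx
  simp only [Pi.sub_apply, sub_mul (poissonSemigroup lam u _ x₁ - u x₁)] at hintegral
  rw [integral_sub (hint x₁ hx₁) (hint x₂ hx₂)] at hintegral
  rw [poissonFracPower, poissonFracPower, ← mul_sub, abs_mul, mul_assoc _ _ (N : ℝ), mul_assoc]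
  gcongr
  simpa only [mul_assoc] using hintegral

end holder

/-! ### The spaces `C^α_+` -/

section membership

variable {β M₁ M₂ : ℝ} {v : ℝ → ℝ}

lemma mem_upperBounds_growthRatioSet (h : ∀ x, 0 < x → |v x| ≤ M₁ * x ^ β) :
    M₁ ∈ upperBounds (growthRatioSet β v) := by
  rintro _ ⟨x, hx, rfl⟩
  exact (div_le_iff₀ (by positivity)).2 (h x hx)

lemma mem_upperBounds_holderRatioSet
    (h : ∀ x y, 0 < x → 0 < y → x ≠ y → |v x - v y| ≤ M₂ * |x - y| ^ β) :
    M₂ ∈ upperBounds (holderRatioSet β v) := by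
  rintro _ ⟨x, y, hx, hy, hxy, rfl⟩
  have : 0 < |x - y| := abs_pos.2 (sub_ne_zero.2 hxy)
  exact (div_le_iff₀ (by positivity)).2 (h x y hx hy hxy)

lemma continuousOn_Ioi_of_abs_sub_le (hβ : 0 < β)
    (h : ∀ x y, 0 < x → 0 < y → x ≠ y → |v x - v y| ≤ M₂ * |x - y| ^ β) :
    ContinuousOn v (Ioi 0) := fun x hx => by
  have hcont : Continuous fun y : ℝ => M₂ * |y - x| ^ β :=
    ((continuous_id.sub continuous_const).abs.rpow_const fun _ => Or.inr hβ.le).const_mul M₂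
  have hlim : Tendsto (fun y : ℝ => M₂ * |y - x| ^ β) (𝓝[Ioi 0] x) (𝓝 0) := by
    simpa [zero_rpow hβ.ne'] using (hcont.tendsto x).mono_left nhdsWithin_le_nhds
  refine tendsto_iff_dist_tendsto_zero.2 <|
    squeeze_zero' (Eventually.of_forall fun _ => dist_nonneg) ?_ hlim
  filter_upwards [self_mem_nhdsWithin] with y hy
  rcases eq_or_ne y x with rfl | hyx
  · simp [zero_rpow hβ.ne']
  · exact h y x hy hx hyx

lemma memHolderPlus_of_abs_le (hβ : 0 < β) (hgrowth : ∀ x, 0 < x → |v x| ≤ M₁ * x ^ β)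
    (hholder : ∀ x y, 0 < x → 0 < y → x ≠ y → |v x - v y| ≤ M₂ * |x - y| ^ β) :
    MemHolderPlus β v :=
  ⟨continuousOn_Ioi_of_abs_sub_le hβ hholder, ⟨M₂, mem_upperBounds_holderRatioSet hholder⟩,
    ⟨M₁, mem_upperBounds_growthRatioSet hgrowth⟩⟩

lemma holderPlusNorm_le (hgrowth : ∀ x, 0 < x → |v x| ≤ M₁ * x ^ β)
    (hholder : ∀ x y, 0 < x → 0 < y → x ≠ y → |v x - v y| ≤ M₂ * |x - y| ^ β) :
    holderPlusNorm β v ≤ M₁ + M₂ := by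
  rw [add_comm]
  exact add_le_add
    (csSup_le ⟨_, 1, 2, one_pos, two_pos, by norm_num, rfl⟩
      (mem_upperBounds_holderRatioSet hholder))
    (csSup_le ⟨_, 1, one_pos, rfl⟩ (mem_upperBounds_growthRatioSet hgrowth))

end membership

lemma sSup_holderRatioSet_nonneg (α : ℝ) (u : ℝ → ℝ) : 0 ≤ sSup (holderRatioSet α u) := by
  refine Real.sSup_nonneg ?_
  rintro _ ⟨x, y, -, -, -, rfl⟩
  positivity

lemma sSup_growthRatioSet_nonneg (α : ℝ) (u : ℝ → ℝ) : 0 ≤ sSup (growthRatioSet α u) := by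
  refine Real.sSup_nonneg ?_
  rintro _ ⟨x, hx, rfl⟩
  positivity

lemma holderPlusNorm_nonneg (α : ℝ) (u : ℝ → ℝ) : 0 ≤ holderPlusNorm α u :=
  add_nonneg (sSup_holderRatioSet_nonneg α u) (sSup_growthRatioSet_nonneg α u)

namespace MemHolderPlus

variable {α : ℝ} {u : ℝ → ℝ}

lemma abs_le (hu : MemHolderPlus α u) {x : ℝ} (hx : 0 < x) :
    |u x| ≤ holderPlusNorm α u * x ^ α :=
  (div_le_iff₀ (by positivity)).1 <| (le_csSup hu.2.2 ⟨x, hx, rfl⟩).trans <|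
    le_add_of_nonneg_left (sSup_holderRatioSet_nonneg α u)

lemma abs_sub_le (hu : MemHolderPlus α u) {x y : ℝ} (hx : 0 < x) (hy : 0 < y) :
    |u x - u y| ≤ holderPlusNorm α u * |x - y| ^ α := by
  have hN := holderPlusNorm_nonneg α u
  rcases eq_or_ne x y with rfl | hxy
  · rw [sub_self, abs_zero]
    positivity
  have : 0 < |x - y| := abs_pos.2 (sub_ne_zero.2 hxy)
  exact (div_le_iff₀ (by positivity)).1 <| (le_csSup hu.2.1 ⟨x, y, hx, hy, hxy, rfl⟩).trans <|
    le_add_of_nonneg_right (sSup_growthRatioSet_nonneg α u)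

lemma abs_indicator_sub_le_of_le (hu : MemHolderPlus α u) (hα : 0 ≤ α) {x y : ℝ} (hxy : x ≤ y) :
    |(Ioi 0).indicator u x - (Ioi 0).indicator u y| ≤ holderPlusNorm α u * |x - y| ^ α := by
  have hN := holderPlusNorm_nonneg α u
  rcases le_or_gt y 0 with hy | hy
  · rw [indicator_of_notMem (notMem_Ioi.2 hy), indicator_of_notMem (notMem_Ioi.2 (hxy.trans hy)),
      sub_self, abs_zero]
    positivity
  rcases le_or_gt x 0 with hx | hx
  · rw [indicator_of_notMem (notMem_Ioi.2 hx), indicator_of_mem (mem_Ioi.2 hy), zero_sub, abs_neg,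
      abs_sub_comm]
    refine (hu.abs_le hy).trans ?_
    gcongr
    exact le_abs.2 (Or.inl (by linarith))
  · rw [indicator_of_mem (mem_Ioi.2 hx), indicator_of_mem (mem_Ioi.2 hy)]
    exact hu.abs_sub_le hx hy

end MemHolderPlus

lemma poissonSemigroup_indicator (lam t x : ℝ) (u : ℝ → ℝ) :
    poissonSemigroup lam ((Ioi 0).indicator u) t x = poissonSemigroup lam u t x :=
  setIntegral_congr_fun measurableSet_Ioi fun y hy => by
    simp only [indicator_of_mem hy]

lemma poissonFracPower_indicator (lam σ : ℝ) (u : ℝ → ℝ) {x : ℝ} (hx : 0 < x) :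
    poissonFracPower lam σ ((Ioi 0).indicator u) x = poissonFracPower lam σ u x := by
  simp only [poissonFracPower, poissonSemigroup_indicator, indicator_of_mem (mem_Ioi.2 hx)]

namespace MemHolderPlus

variable {lam : ℝ} {α : ℝ≥0} {u : ℝ → ℝ}

lemma holderWith_indicator (hu : MemHolderPlus α u) :
    HolderWith (holderPlusNorm α u).toNNReal α ((Ioi 0).indicator u) := fun x y => by
  have hdist : dist ((Ioi 0).indicator u x) ((Ioi 0).indicator u y) ≤
      (holderPlusNorm α u).toNNReal * dist x y ^ (α : ℝ) := by
    rw [coe_toNNReal _ (holderPlusNorm_nonneg _ u)]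
    rcases le_total x y with hxy | hyx
    · exact hu.abs_indicator_sub_le_of_le α.coe_nonneg hxy
    · rw [dist_comm, dist_comm x]
      exact hu.abs_indicator_sub_le_of_le α.coe_nonneg hyx
  rw [edist_nndist, edist_nndist, ← ENNReal.coe_rpow_of_nonneg _ α.coe_nonneg]
  exact_mod_cast hdist

lemma integrableOn_besselPoissonKernel_mul (hu : MemHolderPlus α u) (hlam : 1 ≤ lam)
    (hα0 : 0 < α) (hα1 : α ≤ 1) {t x : ℝ} (ht : 0 < t) (hx : 0 < x) :
    IntegrableOn (fun y => besselPoissonKernel lam t x y * u y) (Ioi 0) := by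
  refine IntegrableOn.congr_fun (_root_.integrableOn_besselPoissonKernel_mul
    (N := holderPlusNorm α u) hlam α.coe_nonneg (mod_cast hα1)
    (hu.holderWith_indicator.continuous hα0).measurable (fun y hy => ?_) ht hx)
    (fun y hy => by rw [indicator_of_mem hy]) measurableSet_Ioi
  rw [indicator_of_mem (mem_Ioi.2 hy)]
  exact hu.abs_le hy

lemma integrableOn_poissonSemigroup_sub_self_mul_rpow (hu : MemHolderPlus α u) (hlam : 1 ≤ lam)
    (hα1 : α < 1) {β : ℝ} (hβ : 0 < β) (hαβ : 0 < α - β) {x : ℝ} (hx : 0 < x) :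
    IntegrableOn (fun t => (poissonSemigroup lam u t x - u x) * t ^ (-1 - β)) (Ioi 0) := by
  simpa only [poissonSemigroup_indicator, indicator_of_mem (mem_Ioi.2 hx)] using
    _root_.integrableOn_poissonSemigroup_sub_self_mul_rpow hlam hα1 hβ hαβ
      hu.holderWith_indicator (indicator_of_notMem self_notMem_Ioi u) hx

end MemHolderPlus

lemma exists_memHolderPlus_poissonFracPower {lam σ : ℝ} {α : ℝ≥0} (hlam : 1 ≤ lam) (hσ : 0 < σ)
    (hα1 : α < 1) (hασ : 0 < α - 2 * σ) :
    ∃ C : ℝ, 0 < C ∧ ∀ {u : ℝ → ℝ}, MemHolderPlus α u →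
      MemHolderPlus (α - 2 * σ) (poissonFracPower lam σ u) ∧
      holderPlusNorm (α - 2 * σ) (poissonFracPower lam σ u) ≤ C * holderPlusNorm α u := by
  obtain ⟨C₁, hC₁, hgrowth⟩ := exists_abs_poissonFracPower_le hlam hσ hα1 hασ
  obtain ⟨C₂, hC₂, hholder⟩ := exists_abs_poissonFracPower_sub_le hlam hσ hα1 hασ
  refine ⟨C₁ + C₂ + 1, by positivity, fun {u} hu => ?_⟩
  have hN := holderPlusNorm_nonneg α u
  have hu0 : (Ioi 0).indicator u 0 = 0 := indicator_of_notMem self_notMem_Ioi u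
  have hgrowth' : ∀ x, 0 < x →
      |poissonFracPower lam σ u x| ≤ C₁ * holderPlusNorm α u * x ^ (α - 2 * σ) := fun x hx => by
    simpa only [poissonFracPower_indicator lam σ u hx, coe_toNNReal _ hN] using
      hgrowth hu.holderWith_indicator hu0 hx
  have hholder' : ∀ x y, 0 < x → 0 < y → x ≠ y →
      |poissonFracPower lam σ u x - poissonFracPower lam σ u y| ≤
        C₂ * holderPlusNorm α u * |x - y| ^ (α - 2 * σ) := fun x y hx hy hxy => by
    simpa only [poissonFracPower_indicator lam σ u hx, poissonFracPower_indicator lam σ u hy,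
      coe_toNNReal _ hN] using hholder hu.holderWith_indicator hu0 hx hy hxy
  exact ⟨memHolderPlus_of_abs_le hασ hgrowth' hholder',
    (holderPlusNorm_le hgrowth' hholder').trans (by linarith)⟩

theorem holder_estimate_positive_power_general {lam σ α : ℝ} (hlam : 1 ≤ lam) (hσ : 0 < σ)
    (hα1 : α < 1) (hασ : 0 < α - 2 * σ) :
    ∃ C : ℝ, 0 < C ∧ ∀ u : ℝ → ℝ, MemHolderPlus α u →
      (∀ t : ℝ, 0 < t → ∀ x : ℝ, 0 < x →
        IntegrableOn (fun y => besselPoissonKernel lam t x y * u y) (Ioi 0)) ∧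
      (∀ x : ℝ, 0 < x →
        IntegrableOn (fun t => (poissonSemigroup lam u t x - u x) * t ^ (-1 - 2 * σ)) (Ioi 0)) ∧
      MemHolderPlus (α - 2 * σ) (poissonFracPower lam σ u) ∧
      holderPlusNorm (α - 2 * σ) (poissonFracPower lam σ u) ≤ C * holderPlusNorm α u := by
  lift α to ℝ≥0 using by linarith
  have hα0 : 0 < α := NNReal.coe_pos.1 (by linarith)
  have hα1' : α < 1 := mod_cast hα1
  obtain ⟨C, hC, hbound⟩ := exists_memHolderPlus_poissonFracPower hlam hσ hα1' hασ
  exact ⟨C, hC, fun u hu =>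
    ⟨fun t ht x hx => hu.integrableOn_besselPoissonKernel_mul hlam hα0 hα1'.le ht hx,
      fun x hx => hu.integrableOn_poissonSemigroup_sub_self_mul_rpow hlam hα1' (by linarith) hασ hx,
      hbound hu⟩⟩

/-- Hölder estimate for the positive power `Δ_λ^{σ}` (Theorem A(b)). -/
theorem holder_estimate_positive_power
    (lam σ α : ℝ) (hlam : 1 ≤ lam) (hσ0 : 0 < σ) (hσ1 : σ < 1)
    (hα1 : α < 1) (h1 : 0 < α - 2 * σ) (h2 : α - 2 * σ < 1) :
    ∃ C : ℝ, 0 < C ∧ ∀ u : ℝ → ℝ, MemHolderPlus α u →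
      IntegrableOn (fun x => |u x| / (1 + x) ^ (1 + 2 * σ)) (Set.Ioi 0) →
      (∀ t : ℝ, 0 < t → ∀ x : ℝ, 0 < x →
        IntegrableOn (fun y => besselPoissonKernel lam t x y * u y) (Set.Ioi 0)) ∧
      (∀ x : ℝ, 0 < x →
        IntegrableOn (fun t => (poissonSemigroup lam u t x - u x) * t ^ (-1 - 2 * σ))
          (Set.Ioi 0)) ∧
      MemHolderPlus (α - 2 * σ)
        (fun x => 1 / gammaNeg (2 * σ) *
          ∫ t in Set.Ioi (0 : ℝ), (poissonSemigroup lam u t x - u x) * t ^ (-1 - 2 * σ)) ∧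
      holderPlusNorm (α - 2 * σ)
          (fun x => 1 / gammaNeg (2 * σ) *
            ∫ t in Set.Ioi (0 : ℝ), (poissonSemigroup lam u t x - u x) * t ^ (-1 - 2 * σ)) ≤
        C * holderPlusNorm α u := by
  obtain ⟨C, hC, h⟩ := holder_estimate_positive_power_general hlam hσ0 hα1 h1
  exact ⟨C, hC, fun u hu _ => h u hu⟩
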